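/- Every graph G with no odd hole satisfies χ(G) ≤ 2^(2^(ω(G)+2)). -/

import Mathlib

open SimpleGraph

universe u

variable {V : Type u}

/-- The independence (stability) number of a graph. -/
noncomputable def indepNum (G : SimpleGraph V) : ℕ :=
  sSup {n | ∃ s : Finset V, s.card = n ∧ ∀ x ∈ s, ∀ y ∈ s, x ≠ y → ¬ G.Adj x y}

/-- A walk is induced: any edge of `G` between vertices of the walk is an edge of the walk. -/
def IsInducedWalk (G : SimpleGraph V) {u v : V} (p : G.Walk u v) : Prop :=
  ∀ x ∈ p.support, ∀ y ∈ p.support, G.Adj x y → p.toSubgraph.Adj x y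

/-- An induced path. -/
def IsInducedPath (G : SimpleGraph V) {u v : V} (p : G.Walk u v) : Prop :=
  p.IsPath ∧ IsInducedWalk G p

/-- An odd hole: an induced cycle of odd length at least 5. -/
def HasOddHole (G : SimpleGraph V) : Prop :=
  ∃ (v : V) (p : G.Walk v v), p.IsCycle ∧ IsInducedWalk G p ∧ Odd p.length ∧ 5 ≤ p.length

/-- A cograph: no induced path on four vertices. -/
def IsCograph (G : SimpleGraph V) : Prop :=
  ¬ ∃ a b c d : V, a ≠ c ∧ a ≠ d ∧ b ≠ d ∧
    G.Adj a b ∧ G.Adj b c ∧ G.Adj c d ∧ ¬ G.Adj a c ∧ ¬ G.Adj a d ∧ ¬ G.Adj b d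

/-- A levelling `(L 0, …, L k)` in `G`. -/
def IsLevelling (G : SimpleGraph V) (k : ℕ) (L : ℕ → Set V) : Prop :=
  (∀ i j, i ≤ k → j ≤ k → i ≠ j → Disjoint (L i) (L j)) ∧
  (∃ x, L 0 = {x}) ∧
  (∀ i, 1 ≤ i → i ≤ k → ∀ v ∈ L i,
     (∃ u ∈ L (i - 1), G.Adj u v) ∧ (∀ h, h + 1 < i → ∀ u ∈ L h, ¬ G.Adj u v))

/-- The interior (internal vertices) of a walk is contained in `S`. -/
def InteriorIn (G : SimpleGraph V) {u v : V} (p : G.Walk u v) (S : Set V) : Prop :=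
  ∀ x ∈ p.support, x ≠ u → x ≠ v → x ∈ S

/-- The union `L 0 ∪ ⋯ ∪ L (k-1)`. -/
def lowerLevels (L : ℕ → Set V) (k : ℕ) : Set V := ⋃ i ∈ Finset.range k, L i

/-- There is an odd induced path between `u` and `v` with interior in the lower levels. -/
def OddConn (G : SimpleGraph V) (L : ℕ → Set V) (k : ℕ) (u v : V) : Prop :=
  u ≠ v ∧ ∃ p : G.Walk u v, IsInducedPath G p ∧ Odd p.length ∧
    InteriorIn G p (lowerLevels L k)

/-- `w ∈ L (i+1)` is a dependent of `u ∈ L i`: `u` is its only parent. -/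
def IsDependent (G : SimpleGraph V) (L : ℕ → Set V) (i : ℕ) (u w : V) : Prop :=
  w ∈ L (i + 1) ∧ G.Adj u w ∧ ∀ x ∈ L i, G.Adj x w → x = u

namespace OddHoleFree

/-- `IndPath G x y n S`: there is an induced path of length `n` from `x` to `y` with vertex
set `S`. -/
inductive IndPath (G : SimpleGraph V) : V → V → ℕ → Set V → Prop
  | nil (x : V) : IndPath G x x 0 {x}
  | cons {a x y : V} {n : ℕ} {S : Set V} : G.Adj a x → IndPath G x y n S → a ∉ S →
      (∀ z ∈ S, G.Adj a z → z = x) → IndPath G a y (n + 1) (insert a S)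

namespace IndPath

variable {G : SimpleGraph V} {x y z v : V} {n m : ℕ} {S T W : Set V}

theorem left_mem (h : IndPath G x y n S) : x ∈ S := by
  cases h <;> simp

theorem right_mem (h : IndPath G x y n S) : y ∈ S := by
  induction h with
  | nil x => simp
  | cons _ _ _ _ ih => exact Set.mem_insert_of_mem _ ih

theorem edge (h : G.Adj x y) : IndPath G x y 1 {x, y} :=
  cons h (nil y) (by simpa using h.ne) (by simp)

theorem two (hxy : G.Adj x y) (hyz : G.Adj y z) (hxz : ¬ G.Adj x z) (hne : x ≠ z) :
    IndPath G x z 2 {x, y, z} :=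
  cons hxy (edge hyz) (by simp [hxy.ne, hne]) (by
    rintro w (rfl | rfl) hw
    · rfl
    · exact absurd hw hxz)

theorem snoc (h : IndPath G x y n S) (hy : G.Adj y z) (hz : z ∉ S)
    (hS : ∀ w ∈ S, G.Adj z w → w = y) : IndPath G x z (n + 1) (insert z S) := by
  induction h with
  | nil x =>
    rw [show insert z ({x} : Set V) = {x, z} from Set.pair_comm _ _]
    exact edge hy
  | @cons a x y n S hax hp ha hS' ih =>
    have h1 := ih hy (fun h => hz (Set.mem_insert_of_mem _ h))
      (fun w hw => hS w (Set.mem_insert_of_mem _ hw))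
    rw [Set.insert_comm]
    refine cons hax h1 ?_ ?_
    · rintro (rfl | h)
      · exact hz (Set.mem_insert _ _)
      · exact ha h
    · rintro w (rfl | hw) haw
      · have := hS a (Set.mem_insert _ _) haw.symm
        exact absurd (this ▸ hp.right_mem) ha
      · exact hS' w hw haw

theorem symm (h : IndPath G x y n S) : IndPath G y x n S := by
  induction h with
  | nil x => exact nil x
  | cons hax hp ha hS ih => exact ih.snoc hax.symm ha hS

theorem append (h : IndPath G x v n S) (h' : IndPath G v y m T) (hST : ∀ w ∈ S, w ∈ T → w = v)
    (hadj : ∀ w ∈ S, w ≠ v → ∀ u ∈ T, u ≠ v → ¬ G.Adj w u) :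
    IndPath G x y (n + m) (S ∪ T) := by
  induction h with
  | nil x =>
    rw [Set.union_eq_self_of_subset_left (by simpa using h'.left_mem), Nat.zero_add]
    exact h'
  | @cons a x v n S hax hp ha hS ih =>
    have h1 := ih h' (fun w hw => hST w (Set.mem_insert_of_mem _ hw))
      (fun w hw => hadj w (Set.mem_insert_of_mem _ hw))
    have hav : a ≠ v := fun h => ha (h ▸ hp.right_mem)
    rw [Set.insert_union, Nat.add_right_comm]
    refine cons hax h1 ?_ ?_
    · rintro (h | h)
      · exact ha h
      · exact hav (hST a (Set.mem_insert _ _) h)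
    · rintro w (hw | hw) haw
      · exact hS w hw haw
      · by_cases hwv : w = v
        · exact hS w (hwv ▸ hp.right_mem) haw
        · exact absurd haw (hadj a (Set.mem_insert _ _) hav w hw hwv)

theorem exists_of_mem (h : IndPath G x y n S) (hz : z ∈ S) :
    ∃ m T, IndPath G z y m T ∧ T ⊆ S := by
  induction h with
  | nil x => obtain rfl : z = x := hz; exact ⟨0, _, nil z, subset_rfl⟩
  | cons hax hp ha hS ih =>
    rcases hz with rfl | hz
    · exact ⟨_, _, cons hax hp ha hS, subset_rfl⟩
    · obtain ⟨m, T, h1, h2⟩ := ih hz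
      exact ⟨m, T, h1, h2.trans (Set.subset_insert _ _)⟩

theorem exists_extend (h : IndPath G x y n S) (hz : z ∉ S) (hw : ∃ w ∈ S, G.Adj z w) :
    ∃ m T, IndPath G z y m (insert z T) ∧ T ⊆ S := by
  induction h with
  | nil x =>
    obtain ⟨w, rfl, hw⟩ := hw
    exact ⟨1, {w}, edge hw, subset_rfl⟩
  | @cons a x y n S hax hp ha hS ih =>
    by_cases h : ∃ w ∈ S, G.Adj z w
    · obtain ⟨m, T, h1, h2⟩ := ih (fun h => hz (Set.mem_insert_of_mem _ h)) h
      exact ⟨m, T, h1, h2.trans (Set.subset_insert _ _)⟩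
    · push Not at h
      obtain ⟨w, hwS, hw⟩ := hw
      have hwa : w = a := by
        rcases hwS with rfl | hwS
        · rfl
        · exact absurd hw (h w hwS)
      subst hwa
      refine ⟨_, _, cons hw (cons hax hp ha hS) hz ?_, subset_rfl⟩
      rintro u (rfl | hu) hzu
      · rfl
      · exact absurd hzu (h u hu)

theorem length_eq_zero (h : IndPath G x x n S) : n = 0 := by
  cases h with
  | nil => rfl
  | cons _ hp ha _ => exact absurd hp.right_mem ha

theorem length_eq_one (h : IndPath G x y n S) (hxy : G.Adj x y) : n = 1 := by
  cases h with
  | nil => exact absurd rfl hxy.ne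
  | cons hax hp ha hS =>
    obtain rfl := hS _ hp.right_mem hxy
    rw [hp.length_eq_zero]

theorem two_le_length (h : IndPath G x y n S) (hne : x ≠ y) (hxy : ¬ G.Adj x y) : 2 ≤ n := by
  cases h with
  | nil => exact absurd rfl hne
  | cons hax hp ha hS =>
    cases hp with
    | nil => exact absurd hax hxy
    | cons => omega

theorem exists_walk (h : IndPath G x y n S) : ∃ p : G.Walk x y, p.IsPath ∧ p.length = n ∧
    (∀ w, w ∈ p.support ↔ w ∈ S) ∧ ∀ u ∈ S, ∀ w ∈ S, G.Adj u w → s(u, w) ∈ p.edges := by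
  induction h with
  | nil x =>
    refine ⟨.nil, by simp, rfl, by simp, ?_⟩
    rintro u rfl w rfl h
    exact absurd h (G.irrefl)
  | @cons a x y n S hax hp ha hS ih =>
    obtain ⟨p, h1, h2, h3, h4⟩ := ih
    refine ⟨.cons hax p, ?_, by simp [h2], by simp [h3], ?_⟩
    · rw [Walk.cons_isPath_iff, h3]; exact ⟨h1, ha⟩
    · rintro u (rfl | hu) w (rfl | hw) huw
      · exact absurd huw G.irrefl
      · rw [hS w hw huw]; simp
      · rw [hS u hu huw.symm, Sym2.eq_swap]; simp
      · simp [h4 u hu w hw huw]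

/-- Two induced paths with the same nonadjacent ends and with disjoint anticomplete interiors
have lengths of the same parity in a graph without odd hole. -/
theorem odd_iff_odd (hG : ¬ HasOddHole G) (h : IndPath G x y n S) (h' : IndPath G x y m T)
    (hne : x ≠ y) (hxy : ¬ G.Adj x y)
    (hadj : ∀ w ∈ S, w ≠ x → w ≠ y → ∀ u ∈ T, u ≠ x → u ≠ y → w ≠ u ∧ ¬ G.Adj w u) :
    Odd n ↔ Odd m := by
  by_contra hcon
  apply hG
  have hn := h.two_le_length hne hxy
  have hm := h'.two_le_length hne hxy
  obtain ⟨p, p1, p2, p3, p4⟩ := h.exists_walk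
  obtain ⟨q, q1, q2, q3, q4⟩ := h'.exists_walk
  have hmeet : ∀ w ∈ p.support, w ∈ q.support → w = x ∨ w = y := by
    intro w hw hw'
    by_contra! hc
    exact (hadj w ((p3 w).1 hw) hc.1 hc.2 w ((q3 w).1 hw') hc.1 hc.2).1 rfl
  cases q with
  | nil => exact absurd rfl hne
  | @cons _ b _ hxb q =>
    rw [Walk.cons_isPath_iff] at q1
    have hxq := q1.2
    have hpath : (q.append p.reverse).IsPath := by
      rw [Walk.isPath_def, Walk.support_append, List.nodup_append]
      refine ⟨q1.1.support_nodup, (p1.reverse.support_nodup).tail, ?_⟩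
      intro a ha c hc hac
      subst hac
      have hcy : a ≠ y := by
        rintro rfl
        have := p1.reverse.support_nodup
        rw [← Walk.cons_tail_support] at this
        exact (List.nodup_cons.1 this).1 hc
      have hcp : a ∈ p.support := by
        have := List.mem_of_mem_tail hc
        simpa using this
      rcases hmeet a hcp (by simp [ha]) with rfl | h
      · exact hxq ha
      · exact hcy h
    refine ⟨x, .cons hxb (q.append p.reverse), ?_, ?_, ?_, ?_⟩
    · rw [Walk.cons_isCycle_iff]
      refine ⟨hpath, ?_⟩
      rw [Walk.edges_append, List.mem_append, not_or]
      refine ⟨fun h => hxq (Walk.fst_mem_support_of_mem_edges _ h), fun h => ?_⟩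
      have hb : b ∈ p.support := by
        have := Walk.snd_mem_support_of_mem_edges _ h
        simpa using this
      rcases hmeet b hb (by simp) with h | h
      · exact hxb.ne h.symm
      · exact hxy (h ▸ hxb)
    · intro u hu w hw huw
      rw [Walk.adj_toSubgraph_iff_mem_edges]
      have key : ∀ v, v ∈ (Walk.cons hxb (q.append p.reverse)).support → v ∈ S ∨ v ∈ T := by
        intro v hv
        rw [Walk.support_cons, List.mem_cons, Walk.mem_support_append_iff] at hv
        rcases hv with rfl | hv | hv
        · exact Or.inl h.left_mem
        · exact Or.inr ((q3 v).1 (by simp [hv]))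
        · exact Or.inl ((p3 v).1 (by simpa using hv))
      have hS : ∀ u ∈ S, ∀ w ∈ S, G.Adj u w →
          s(u, w) ∈ (Walk.cons hxb (q.append p.reverse)).edges := by
        intro u hu w hw huw
        have := p4 u hu w hw huw
        simp [this]
      have hT : ∀ u ∈ T, ∀ w ∈ T, G.Adj u w →
          s(u, w) ∈ (Walk.cons hxb (q.append p.reverse)).edges := by
        intro u hu w hw huw
        have := q4 u hu w hw huw
        rw [Walk.edges_cons, List.mem_cons] at this
        rw [Walk.edges_cons, List.mem_cons, Walk.edges_append, List.mem_append]
        tauto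
      have hST : ∀ u ∈ S, ∀ w ∈ T, G.Adj u w →
          s(u, w) ∈ (Walk.cons hxb (q.append p.reverse)).edges := by
        intro u hu w hw huw
        by_cases hu' : u = x ∨ u = y
        · have : u ∈ T := by rcases hu' with rfl | rfl; exacts [h'.left_mem, h'.right_mem]
          exact hT u this w hw huw
        by_cases hw' : w = x ∨ w = y
        · have : w ∈ S := by rcases hw' with rfl | rfl; exacts [h.left_mem, h.right_mem]
          exact hS u hu w this huw
        push Not at hu' hw'
        exact absurd huw (hadj u hu hu'.1 hu'.2 w hw hw'.1 hw'.2).2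
      rcases key u hu with hu | hu <;> rcases key w hw with hw | hw
      · exact hS u hu w hw huw
      · exact hST u hu w hw huw
      · rw [Sym2.eq_swap]; exact hST w hw u hu huw.symm
      · exact hT u hu w hw huw
    · simp only [Walk.length_cons, Walk.length_append, Walk.length_reverse] at q2 ⊢
      rw [p2, show q.length + n + 1 = m + n by omega]
      grind
    · simp only [Walk.length_cons, Walk.length_append, Walk.length_reverse] at q2 ⊢
      grind

end IndPath

/-- `x` and `y` are joined by an induced path inside `W`. -/
def Joined (G : SimpleGraph V) (W : Set V) (x y : V) : Prop :=
  ∃ n S, IndPath G x y n S ∧ S ⊆ W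

namespace Joined

variable {G : SimpleGraph V} {x y z : V} {W W' : Set V}

theorem refl (hx : x ∈ W) : Joined G W x x :=
  ⟨0, {x}, .nil x, by simpa using hx⟩

theorem symm (h : Joined G W x y) : Joined G W y x := by
  obtain ⟨n, S, h, hS⟩ := h
  exact ⟨n, S, h.symm, hS⟩

theorem mono (h : Joined G W x y) (hW : W ⊆ W') : Joined G W' x y := by
  obtain ⟨n, S, h, hS⟩ := h
  exact ⟨n, S, h, hS.trans hW⟩

theorem head (h : Joined G W x y) (hz : z ∈ W) (hzx : G.Adj z x) : Joined G W z y := by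
  obtain ⟨n, S, h, hS⟩ := h
  by_cases hzS : z ∈ S
  · obtain ⟨m, T, h1, h2⟩ := h.exists_of_mem hzS
    exact ⟨m, T, h1, h2.trans hS⟩
  · obtain ⟨m, T, h1, h2⟩ := h.exists_extend hzS ⟨x, h.left_mem, hzx⟩
    exact ⟨m, _, h1, Set.insert_subset hz (h2.trans hS)⟩

theorem trans (h : Joined G W x y) (h' : Joined G W y z) : Joined G W x z := by
  obtain ⟨n, S, h, hS⟩ := h
  induction h with
  | nil => exact h'
  | cons hax hp ha hS' ih =>
    exact (ih h' ((Set.subset_insert _ _).trans hS)).head (hS (Set.mem_insert _ _)) hax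

end Joined

end OddHoleFree

namespace OddHoleFree

section Pentagon

/-- The two-graph of `e` on five points is the pentagon, with a fixed labelling. -/
def IsPentagon (e : Fin 5 → Fin 5 → Bool) : Prop :=
  e 1 2 = !(e 0 1 ^^ e 0 2) ∧ e 2 3 = !(e 0 2 ^^ e 0 3) ∧ e 3 4 = !(e 0 3 ^^ e 0 4) ∧
  e 1 3 = (e 0 1 ^^ e 0 3) ∧ e 1 4 = (e 0 1 ^^ e 0 4) ∧ e 2 4 = (e 0 2 ^^ e 0 4)

/-- The matrices whose two-graph is the pentagon. -/
def pentagonMatrix (p q r s : Bool) : Fin 5 → Fin 5 → Bool :=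
  ![![false, p, q, r, s], ![p, false, !(p ^^ q), p ^^ r, p ^^ s],
    ![q, !(p ^^ q), false, !(q ^^ r), q ^^ s], ![r, p ^^ r, !(q ^^ r), false, !(r ^^ s)],
    ![s, p ^^ s, q ^^ s, !(r ^^ s), false]]

variable {e : Fin 5 → Fin 5 → Bool}

theorem IsPentagon.eq (h : IsPentagon e) (hs : ∀ i j, e i j = e j i) :
    ∃ p q r s : Bool, ∀ i j, i ≠ j → e i j = pentagonMatrix p q r s i j := by
  obtain ⟨h1, h2, h3, h4, h5, h6⟩ := h
  refine ⟨e 0 1, e 0 2, e 0 3, e 0 4, ?_⟩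
  intro i j hij
  fin_cases i <;> fin_cases j <;>
    simp [pentagonMatrix, h1, h2, h3, h4, h5, h6, hs 1 0, hs 2 0, hs 3 0, hs 4 0, hs 2 1, hs 3 1, hs 4 1,
      hs 3 2,
      hs 4 2, hs 4 3] at hij ⊢

theorem IsPentagon.false_of_twins (h : IsPentagon e) (hs : ∀ i j, e i j = e j i) {a b : Fin 5}
    (hab : a ≠ b) (δ : Bool) (htw : ∀ j, j ≠ a → j ≠ b → e a j = (δ ^^ e b j)) : False := by
  obtain ⟨p, q, r, s, h⟩ := h.eq hs
  have htw' : ∀ j, j ≠ a → j ≠ b → _ = (δ ^^ _) := fun j ha hb =>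
    (h a j ha.symm).symm.trans ((htw j ha hb).trans (congrArg (δ ^^ ·) (h b j hb.symm)))
  clear htw h hs
  revert δ p q r s a b
  decide

theorem IsPentagon.switch (h : IsPentagon e) (o : Fin 5) (δ : Bool) :
    IsPentagon (fun i j => e i j ^^ ((decide (i = o) ^^ decide (j = o)) && δ)) := by
  obtain ⟨h1, h2, h3, h4, h5, h6⟩ := h
  unfold IsPentagon
  dsimp only
  rw [h1, h2, h3, h4, h5, h6]
  generalize e 0 1 = p
  generalize e 0 2 = q
  generalize e 0 3 = r
  generalize e 0 4 = s
  revert p q r s δ o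
  decide

theorem IsPentagon.exists_path (h : IsPentagon e) (hs : ∀ i j, e i j = e j i) :
    ∃ a b c d : Fin 5, a ≠ c ∧ a ≠ d ∧ b ≠ d ∧ a ≠ b ∧ b ≠ c ∧ c ≠ d ∧ e a b = true ∧
      e b c = true ∧ e c d = true ∧ e a c = false ∧ e a d = false ∧ e b d = false := by
  obtain ⟨p, q, r, s, h⟩ := h.eq hs
  by_contra hcon
  have key : ∀ a b c d : Fin 5, (a ≠ c ∧ a ≠ d ∧ b ≠ d ∧ a ≠ b ∧ b ≠ c ∧ c ≠ d) →
      ¬ (pentagonMatrix p q r s a b = true ∧ pentagonMatrix p q r s b c = true ∧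
      pentagonMatrix p q r s c d = true ∧ pentagonMatrix p q r s a c = false ∧
      pentagonMatrix p q r s a d = false ∧ pentagonMatrix p q r s b d = false) := by
    rintro a b c d ⟨n1, n2, n3, n4, n5, n6⟩ hh
    rw [← h a b n4, ← h b c n5, ← h c d n6, ← h a c n1, ← h a d n2, ← h b d n3] at hh
    exact hcon ⟨a, b, c, d, n1, n2, n3, n4, n5, n6, hh⟩
  clear h hs hcon
  revert p q r s
  decide

end Pentagon

end OddHoleFree

namespace OddHoleFree

section Pentagon

variable {G : SimpleGraph V}

theorem decide_odd_add (n m : ℕ) :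
    decide (Odd (n + m)) = (decide (Odd n) ^^ decide (Odd m)) := by
  by_cases hn : Odd n <;> by_cases hm : Odd m <;>
    simp [hn, hm, Nat.odd_add, ← Nat.not_odd_iff_even]

theorem IndPath.subset_of_separation {v x : V} {K R S : Set V} {n : ℕ} (h : IndPath G x v n S)
    (hS : S ⊆ insert v (K ∪ R)) (hx : x ∈ insert v K) (hKR : ∀ a ∈ K, ∀ b ∈ R, ¬ G.Adj a b) :
    S ⊆ insert v K := by
  induction h with
  | nil x => simp
  | @cons a x v n S hax hp ha hS' ih =>
    have hav : a ≠ v := fun h => ha (h ▸ hp.right_mem)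
    have haK : a ∈ K := hx.resolve_left hav
    refine Set.insert_subset hx (ih ((Set.subset_insert _ _).trans hS) ?_)
    rcases hS (Set.mem_insert_of_mem _ hp.left_mem) with h | h | h
    · exact Or.inl h
    · exact Or.inr h
    · exact absurd hax (hKR a haK x h)

/-- The parity of induced paths inside `W` between the points `t i` is well defined and given
by `e`. -/
def IsParity (G : SimpleGraph V) (W : Set V) (t : Fin 5 → V) (e : Fin 5 → Fin 5 → Bool) : Prop :=
  ∀ i j, i ≠ j → ∀ n S, IndPath G (t i) (t j) n S → S ⊆ W → e i j = decide (Odd n)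

theorem not_isPentagon_of_separation [Finite V] {W : Set V} {t : Fin 5 → V}
    {e : Fin 5 → Fin 5 → Bool}
    (IH : ∀ W' : Set V, W'.ncard < W.ncard → ∀ (t' : Fin 5 → V) (e' : Fin 5 → Fin 5 → Bool),
      (∀ x ∈ W', ∀ y ∈ W', Joined G W' x y) → Function.Injective t' → (∀ i, t' i ∈ W') →
      (∀ i j, e' i j = e' j i) → IsParity G W' t' e' → ¬ IsPentagon e')
    (hW : ∀ x ∈ W, ∀ y ∈ W, Joined G W x y) (ht : Function.Injective t) (htW : ∀ i, t i ∈ W)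
    (hs : ∀ i j, e i j = e j i) (hp : IsParity G W t e) (hpent : IsPentagon e)
    {v : V} {K R : Set V} (hvR : v ∉ R) (hKR : ∀ a ∈ K, a ∉ R)
    (hadj : ∀ a ∈ K, ∀ b ∈ R, ¬ G.Adj a b) (hWe : W = insert v (K ∪ R)) (hR : R.Nonempty)
    {a b : Fin 5} (hab : a ≠ b) (hother : ∀ j, j ≠ a → j ≠ b → t j ∈ insert v K) : False := by
  classical
  have hvW : v ∈ W := by rw [hWe]; exact Set.mem_insert _ _
  have hKW : insert v K ⊆ W := by
    rw [hWe]; exact Set.insert_subset_insert Set.subset_union_left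
  have hRW : insert v R ⊆ W := by
    rw [hWe]; exact Set.insert_subset_insert Set.subset_union_right
  have hcard : (insert v K).ncard < W.ncard := by
    refine Set.ncard_lt_ncard ⟨hKW, fun h => ?_⟩
    obtain ⟨r, hr⟩ := hR
    rcases h (hRW (Set.mem_insert_of_mem _ hr)) with h | h
    · exact hvR (h ▸ hr)
    · exact hKR r h hr
  have hmemR : ∀ x ∈ W, x ∉ insert v K → x ∈ insert v R := by
    intro x hx hx'
    rw [hWe] at hx
    simp only [Set.mem_insert_iff, Set.mem_union] at hx hx' ⊢
    tauto
  have toK : ∀ {x n S}, IndPath G x v n S → S ⊆ W → x ∈ insert v K → S ⊆ insert v K := by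
    intro x n S h hS hx
    exact h.subset_of_separation (hWe ▸ hS) hx hadj
  have toR : ∀ {x n S}, IndPath G x v n S → S ⊆ W → x ∈ insert v R → S ⊆ insert v R := by
    intro x n S h hS hx
    refine h.subset_of_separation (R := K) ?_ hx fun a ha b hb hab => hadj b hb a ha hab.symm
    rw [Set.union_comm]; exact hWe ▸ hS
  have hKj : ∀ x ∈ insert v K, ∀ y ∈ insert v K, Joined G (insert v K) x y := by
    have h0 : ∀ x ∈ insert v K, Joined G (insert v K) x v := by
      intro x hx
      obtain ⟨n, S, h, hS⟩ := hW x (hKW hx) v hvW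
      exact ⟨n, S, h, toK h hS hx⟩
    intro x hx y hy
    exact (h0 x hx).trans (h0 y hy).symm
  have cross : ∀ i j n m S T, i ≠ j → IndPath G (t i) v n S → S ⊆ insert v K →
      IndPath G (t j) v m T → T ⊆ insert v R →
      e i j = (decide (Odd n) ^^ decide (Odd m)) := by
    intro i j n m S T hij h1 hS h2 hT
    rw [← decide_odd_add]
    refine hp i j hij _ (S ∪ T) (h1.append h2.symm ?_ ?_)
      (Set.union_subset (hS.trans hKW) (hT.trans hRW))
    · intro w hw hw'
      rcases hS hw with h | h
      · exact h
      · rcases hT hw' with h' | h'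
        · exact h'
        · exact absurd h' (hKR w h)
    · intro w hw hwv u hu huv
      exact hadj w ((hS hw).resolve_left hwv) u ((hT hu).resolve_left huv)
  choose n S hpath hSW using fun i => hW (t i) (htW i) v hvW
  have cross' : ∀ i j, t i ∈ insert v K → t j ∉ insert v K →
      e j i = (decide (Odd (n j)) ^^ decide (Odd (n i))) := by
    intro i j hi hj
    have hij : i ≠ j := by rintro rfl; exact hj hi
    rw [hs j i, Bool.xor_comm]
    exact cross i j _ _ _ _ hij (hpath i) (toK (hpath i) (hSW i) hi) (hpath j)
      (toR (hpath j) (hSW j) (hmemR _ (htW j) hj))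
  have one : ∀ o, t o ∉ insert v K → (∀ j, j ≠ o → t j ∈ insert v K) → False := by
    intro o ho hj
    by_cases hv : ∃ i, t i = v
    · obtain ⟨i, hi⟩ := hv
      have hio : i ≠ o := by
        rintro rfl
        exact ho (hi ▸ Set.mem_insert _ _)
      refine hpent.false_of_twins hs hio.symm (decide (Odd (n o))) fun j hjo hji => ?_
      rw [cross' j o (hj j hjo) ho]
      congr 1
      rw [hs i j]
      have := hpath j
      rw [← hi] at this
      exact (hp j i hji _ _ this (hSW j)).symm
    · push Not at hv
      refine IH _ hcard (Function.update t o v) _ hKj ?_ ?_ ?_ ?_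
        (hpent.switch o (decide (Odd (n o))))
      · intro i j hij
        by_cases hi : i = o <;> by_cases hj : j = o
        · rw [hi, hj]
        · subst hi
          rw [Function.update_self, Function.update_of_ne hj] at hij
          exact absurd hij.symm (hv j)
        · subst hj
          rw [Function.update_self, Function.update_of_ne hi] at hij
          exact absurd hij (hv i)
        · rw [Function.update_of_ne hi, Function.update_of_ne hj] at hij
          exact ht hij
      · intro i
        by_cases hi : i = o
        · subst hi; rw [Function.update_self]; exact Set.mem_insert _ _
        · rw [Function.update_of_ne hi]; exact hj i hi
      · intro i j
        simp only [hs i j, Bool.xor_comm]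
      · have key : ∀ j, j ≠ o → ∀ m T, IndPath G (t j) v m T → T ⊆ insert v K →
            (e j o ^^ decide (Odd (n o))) = decide (Odd m) := by
          intro j hjo m T h hT
          rw [cross j o m (n o) T (S o) hjo h hT (hpath o)
            (toR (hpath o) (hSW o) (hmemR _ (htW o) ho))]
          simp
        intro i j hij m T h hT
        by_cases hi : i = o
        · subst hi
          rw [Function.update_self, Function.update_of_ne hij.symm] at h
          have := key j hij.symm m T h.symm hT
          simpa [hij.symm, hs i j] using this
        · by_cases hj' : j = o
          · subst hj'
            rw [Function.update_self, Function.update_of_ne hij] at h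
            have := key i hij m T h hT
            simpa [hij] using this
          · rw [Function.update_of_ne hi, Function.update_of_ne hj'] at h
            simpa [hi, hj'] using hp i j hij m T h (hT.trans hKW)
  by_cases ha : t a ∈ insert v K <;> by_cases hb : t b ∈ insert v K
  · refine IH _ hcard t e hKj ht ?_ hs ?_ hpent
    · intro i
      by_cases h1 : i = a
      · exact h1 ▸ ha
      · by_cases h2 : i = b
        · exact h2 ▸ hb
        · exact hother i h1 h2
    · intro i j hij m T h hT
      exact hp i j hij m T h (hT.trans hKW)
  · refine one b hb fun j hj => ?_
    by_cases h1 : j = a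
    · exact h1 ▸ ha
    · exact hother j h1 hj
  · refine one a ha fun j hj => ?_
    by_cases h1 : j = b
    · exact h1 ▸ hb
    · exact hother j hj h1
  · refine hpent.false_of_twins hs hab (decide (Odd (n a)) ^^ decide (Odd (n b)))
      fun j hja hjb => ?_
    rw [cross' j a (hother j hja hjb) ha, cross' j b (hother j hja hjb) hb]
    simp

theorem not_isPentagon_of_isParity [Finite V] (N : ℕ) : ∀ W : Set V, W.ncard = N →
    ∀ (t : Fin 5 → V) (e : Fin 5 → Fin 5 → Bool), (∀ x ∈ W, ∀ y ∈ W, Joined G W x y) →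
      Function.Injective t → (∀ i, t i ∈ W) → (∀ i j, e i j = e j i) → IsParity G W t e →
      ¬ IsPentagon e := by
  classical
  induction N using Nat.strong_induction_on with
  | _ N IH =>
  intro W hN t e hW ht htW hs hp hpent
  replace IH : ∀ W' : Set V, W'.ncard < W.ncard → _ := fun W' h => IH _ (hN ▸ h) W' rfl
  by_cases hc : ∃ v ∈ W, ∃ x ∈ W, ∃ y ∈ W, x ≠ v ∧ y ≠ v ∧ ¬ Joined G (W \ {v}) x y
  · obtain ⟨v, hv, x, hx, y, hy, hxv, hyv, hxy⟩ := hc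
    set K : Set V := {z | z ∈ W \ {v} ∧ Joined G (W \ {v}) z x} with hK
    set R : Set V := {z | z ∈ W \ {v} ∧ ¬ Joined G (W \ {v}) z x} with hR
    have hWe : W = insert v (K ∪ R) := by
      ext z
      simp only [hK, hR, Set.mem_insert_iff, Set.mem_union, Set.mem_ofPred_eq, Set.mem_sdiff,
        Set.mem_singleton_iff]
      by_cases hz : z = v
      · simp [hz, hv]
      · tauto
    have hvK : v ∉ K := fun h => h.1.2 rfl
    have hvR : v ∉ R := fun h => h.1.2 rfl
    have hKR : ∀ a ∈ K, a ∉ R := fun a ha hb => hb.2 ha.2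
    have hadj : ∀ a ∈ K, ∀ b ∈ R, ¬ G.Adj a b :=
      fun a ha b hb hab => hb.2 (ha.2.head hb.1 hab.symm)
    have hxK : x ∈ K := ⟨⟨hx, hxv⟩, .refl ⟨hx, hxv⟩⟩
    have hyR : y ∈ R := ⟨⟨hy, hyv⟩, fun h => hxy h.symm⟩
    have hfin : ∀ s : Finset (Fin 5), s.card ≤ 2 → ∃ a b, a ≠ b ∧ s ⊆ {a, b} := by decide
    have hdisj : Disjoint (Finset.univ.filter fun i => t i ∉ insert v K)
        (Finset.univ.filter fun i => t i ∉ insert v R) := by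
      rw [Finset.disjoint_filter]
      intro i _ h1 h2
      have := htW i
      rw [hWe] at this
      simp only [Set.mem_insert_iff, Set.mem_union] at this h1 h2
      tauto
    have hcard := (Finset.card_union_of_disjoint hdisj).symm.trans_le (Finset.card_le_univ _)
    rw [Fintype.card_fin] at hcard
    have h2 : (Finset.univ.filter fun i => t i ∉ insert v K).card ≤ 2 ∨
        (Finset.univ.filter fun i => t i ∉ insert v R).card ≤ 2 := by omega
    rcases h2 with h2 | h2
    · obtain ⟨a, b, hab, hsub⟩ := hfin _ h2
      refine not_isPentagon_of_separation IH hW ht htW hs hp hpent hvR hKR hadj hWe ⟨y, hyR⟩ hab ?_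
      intro j hja hjb
      by_contra hj
      have := hsub (Finset.mem_filter.2 ⟨Finset.mem_univ j, hj⟩)
      simp [hja, hjb] at this
    · obtain ⟨a, b, hab, hsub⟩ := hfin _ h2
      refine not_isPentagon_of_separation IH hW ht htW hs hp hpent hvK
        (fun a ha hb => hKR a hb ha) (fun a ha b hb h => hadj b hb a ha h.symm)
        (by rw [Set.union_comm]; exact hWe) ⟨x, hxK⟩ hab ?_
      intro j hja hjb
      by_contra hj
      have := hsub (Finset.mem_filter.2 ⟨Finset.mem_univ j, hj⟩)
      simp [hja, hjb] at this
  · push Not at hc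
    by_cases hv : ∃ v ∈ W, ∀ i, t i ≠ v
    · obtain ⟨v, hv, hvt⟩ := hv
      refine IH (W \ {v}) (Set.ncard_sdiff_singleton_lt_of_mem hv) t e ?_ ht
        (fun i => ⟨htW i, hvt i⟩) hs ?_ hpent
      · intro x hx y hy
        exact hc v hv x hx.1 y hy.1 hx.2 hy.2
      · intro i j hij m T h hT
        exact hp i j hij m T h (hT.trans Set.sdiff_subset)
    · push Not at hv
      have nbr : ∀ j k, j ≠ k → ∃ i, i ≠ k ∧ G.Adj (t j) (t i) := by
        intro j k hjk
        have h3 : ∀ j k : Fin 5, ∃ m, m ≠ j ∧ m ≠ k := by decide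
        obtain ⟨m, hmj, hmk⟩ := h3 j k
        obtain ⟨n, S, h, hS⟩ := hc (t k) (htW k) (t j) (htW j) (t m) (htW m)
          (ht.ne hjk) (ht.ne hmk)
        generalize hz : t m = z at h
        cases h with
        | nil => exact absurd (ht hz) hmj
        | cons hax hp _ _ =>
          have hx := hS (Set.mem_insert_of_mem _ hp.left_mem)
          obtain ⟨i, rfl⟩ := hv _ hx.1
          exact ⟨i, fun h => hx.2 (h ▸ rfl), hax⟩
      have two : ∀ j, ∃ a b, a ≠ b ∧ G.Adj (t j) (t a) ∧ G.Adj (t j) (t b) := by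
        intro j
        have h3 : ∀ j : Fin 5, ∃ m, j ≠ m := by decide
        obtain ⟨m, hm⟩ := h3 j
        obtain ⟨a, -, ha⟩ := nbr j m hm
        obtain ⟨b, hba, hb⟩ := nbr j a (fun h => G.irrefl (h ▸ ha))
        exact ⟨a, b, hba.symm, ha, hb⟩
      have he : ∀ i j, i ≠ j → (e i j = true ↔ G.Adj (t i) (t j)) := by
        intro i j hij
        by_cases h : G.Adj (t i) (t j)
        · have := hp i j hij 1 _ (.edge h) (by
            intro w hw
            rcases hw with rfl | rfl
            exacts [htW i, htW j])
          simp [this, h]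
        · have hcom : ∃ m, G.Adj (t i) (t m) ∧ G.Adj (t m) (t j) := by
            by_contra hno
            push Not at hno
            obtain ⟨a, b, hab, ha, hb⟩ := two i
            obtain ⟨c, d, hcd, hc', hd⟩ := two j
            have hnd : [i, j, a, b, c, d].Nodup := by
              have n1 : i ≠ a := fun h => G.irrefl (h ▸ ha)
              have n2 : i ≠ b := fun h => G.irrefl (h ▸ hb)
              have n3 : i ≠ c := by rintro rfl; exact h hc'.symm
              have n4 : i ≠ d := by rintro rfl; exact h hd.symm
              have n5 : j ≠ a := by rintro rfl; exact h ha
              have n6 : j ≠ b := by rintro rfl; exact h hb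
              have n7 : j ≠ c := fun h => G.irrefl (h ▸ hc')
              have n8 : j ≠ d := fun h => G.irrefl (h ▸ hd)
              have n9 : a ≠ c := by rintro rfl; exact hno _ ha hc'.symm
              have n10 : a ≠ d := by rintro rfl; exact hno _ ha hd.symm
              have n11 : b ≠ c := by rintro rfl; exact hno _ hb hc'.symm
              have n12 : b ≠ d := by rintro rfl; exact hno _ hb hd.symm
              simp [*]
            simpa using hnd.length_le_card
          obtain ⟨m, h1, h2⟩ := hcom
          have := hp i j hij 2 _ (.two h1 h2 h (ht.ne hij)) (by
            intro w hw
            rcases hw with rfl | rfl | rfl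
            exacts [htW i, htW m, htW j])
          have h2 : ¬ Odd 2 := by decide
          simp [this, h, h2]
      obtain ⟨a, b, c, d, n1, n2, n3, n4, n5, n6, hab, hbc, hcd, hac, had, hbd⟩ :=
        hpent.exists_path hs
      rw [he _ _ n4] at hab
      rw [he _ _ n5] at hbc
      rw [he _ _ n6] at hcd
      rw [← Bool.not_eq_true, he _ _ n1] at hac
      rw [← Bool.not_eq_true, he _ _ n3] at hbd
      have hP : IndPath G (t a) (t d) 3 (insert (t a) {t b, t c, t d}) := by
        refine .cons hab (.two hbc hcd hbd (ht.ne n3)) ?_ ?_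
        · simp [ht.ne n4, ht.ne n1, ht.ne n2]
        · rintro z (rfl | rfl | rfl) hz
          · rfl
          · exact absurd hz hac
          · rw [← he _ _ n2, had] at hz
            exact absurd hz (by simp)
      have := hp a d n2 3 _ hP (by
        rintro w (rfl | rfl | rfl | rfl)
        exacts [htW a, htW b, htW c, htW d])
      rw [had] at this
      exact absurd this (by decide)

end Pentagon

end OddHoleFree

namespace OddHoleFree

section Cograph

variable {e : V → V → Prop} {Q X Y : Set V} {v : V}

/-- The symmetric relation `e` has no induced path on four vertices in `Q`. -/
def PathFree (e : V → V → Prop) (Q : Set V) : Prop :=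
  ∀ a ∈ Q, ∀ b ∈ Q, ∀ c ∈ Q, ∀ d ∈ Q,
    e a b → e b c → e c d → ¬ e a c → ¬ e a d → ¬ e b d → False

theorem PathFree.mono {Q' : Set V} (h : PathFree e Q) (hQ : Q' ⊆ Q) : PathFree e Q' :=
  fun a ha b hb c hc d hd => h a (hQ ha) b (hQ hb) c (hQ hc) d (hQ hd)

theorem PathFree.compl (hsym : ∀ x y, e x y → e y x) (h : PathFree e Q) :
    PathFree (fun x y => ¬ e x y) Q := by
  intro a ha b hb c hc d hd hab hbc hcd hac had hbd
  rw [not_not] at hac had hbd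
  exact h b hb d hd a ha c hc hbd (hsym _ _ had) hac (fun h => hab (hsym _ _ h)) hbc
    (fun h => hcd (hsym _ _ h))

/-- `Q` splits into two nonempty parts that are either complete or anticomplete. -/
def Splits (e : V → V → Prop) (Q : Set V) : Prop :=
  ∃ X Y : Set V, X.Nonempty ∧ Y.Nonempty ∧ Disjoint X Y ∧ X ∪ Y = Q ∧
    ((∀ x ∈ X, ∀ y ∈ Y, e x y) ∨ (∀ x ∈ X, ∀ y ∈ Y, ¬ e x y))

theorem splits_insert_of_mixed (hsym : ∀ x y, e x y → e y x)
    (h : PathFree e (insert v (X ∪ Y))) (hXY : Disjoint X Y) (hv : v ∉ X ∪ Y)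
    (hanti : ∀ x ∈ X, ∀ y ∈ Y, ¬ e x y) {u w : V} (hu : u ∈ Y) (hvu : e v u) (hw : w ∈ X)
    (hvw : ¬ e v w) : Splits e (insert v (X ∪ Y)) := by
  refine ⟨{x | x ∈ X ∧ ¬ e v x}, insert v (Y ∪ {x | x ∈ X ∧ e v x}), ⟨w, hw, hvw⟩,
    ⟨v, Set.mem_insert _ _⟩, ?_, ?_, Or.inr ?_⟩
  · rw [Set.disjoint_left] at hXY ⊢
    rintro x ⟨hx, hvx⟩ (rfl | hx' | hx')
    · exact hv (Or.inl hx)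
    · exact hXY hx hx'
    · exact hvx hx'.2
  · ext x
    simp only [Set.mem_union, Set.mem_insert_iff, Set.mem_ofPred_eq]
    tauto
  · rintro x ⟨hx, hvx⟩ y (rfl | hy | ⟨hy, hvy⟩) hxy
    · exact hvx (hsym _ _ hxy)
    · exact hanti x hx y hy hxy
    · exact h u (by simp [hu]) v (by simp) y (by simp [hy]) x (by simp [hx]) (hsym _ _ hvu) hvy
        (hsym _ _ hxy) (fun h => hanti y hy u hu (hsym _ _ h))
        (fun h => hanti x hx u hu (hsym _ _ h)) hvx

theorem splits_insert (hsym : ∀ x y, e x y → e y x)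
    (h : PathFree e (insert v (X ∪ Y))) (hX : X.Nonempty) (hY : Y.Nonempty)
    (hXY : Disjoint X Y) (hv : v ∉ X ∪ Y)
    (hanti : ∀ x ∈ X, ∀ y ∈ Y, ¬ e x y) : Splits e (insert v (X ∪ Y)) := by
  have hvX : v ∉ X := fun h => hv (Or.inl h)
  have hvY : v ∉ Y := fun h => hv (Or.inr h)
  have hanti' : ∀ y ∈ Y, ∀ x ∈ X, ¬ e y x := fun y hy x hx h => hanti x hx y hy (hsym _ _ h)
  by_cases hnX : ∃ x ∈ X, e v x
  · by_cases hnY : ∃ y ∈ Y, e v y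
    · obtain ⟨a, ha, hva⟩ := hnX
      obtain ⟨b, hb, hvb⟩ := hnY
      by_cases hc : ∀ z ∈ X ∪ Y, e v z
      · refine ⟨{v}, X ∪ Y, ⟨v, rfl⟩, hX.inl, by simpa using hv, by simp, Or.inl ?_⟩
        rintro _ rfl
        exact hc
      · push Not at hc
        obtain ⟨w, hw | hw, hvw⟩ := hc
        · exact splits_insert_of_mixed hsym h hXY hv hanti hb hvb hw hvw
        · rw [Set.union_comm] at h hv ⊢
          exact splits_insert_of_mixed hsym h hXY.symm hv hanti' ha hva hw hvw
    · push Not at hnY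
      refine ⟨Y, insert v X, hY, ⟨v, Set.mem_insert _ _⟩, ?_, ?_, Or.inr ?_⟩
      · simpa [hvY] using hXY.symm
      · rw [Set.union_insert, Set.union_comm]
      · rintro y hy x (rfl | hx) hyx
        · exact hnY y hy (hsym _ _ hyx)
        · exact hanti' y hy x hx hyx
  · push Not at hnX
    refine ⟨X, insert v Y, hX, ⟨v, Set.mem_insert _ _⟩, ?_, ?_, Or.inr ?_⟩
    · simpa [hvX] using hXY
    · rw [Set.union_insert]
    · rintro x hx y (rfl | hy) hxy
      · exact hnX x hx (hsym _ _ hxy)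
      · exact hanti x hx y hy hxy

theorem PathFree.splits [Finite V] (hsym : ∀ x y, e x y → e y x) (h : PathFree e Q)
    (hQ : Q.Nontrivial) : Splits e Q := by
  induction Q, Q.toFinite using Set.Finite.induction_on with
  | empty => simp at hQ
  | @insert v Q' hv _ ih =>
    by_cases hQ' : Q'.Nontrivial
    · obtain ⟨X, Y, hX, hY, hXY, rfl, hc⟩ := ih (h.mono (Set.subset_insert _ _)) hQ'
      rcases hc with hc | hc
      · obtain ⟨X', Y', h1, h2, h3, h4, h5⟩ := splits_insert (e := fun x y => ¬ e x y)
          (fun x y h h' => h (hsym _ _ h')) (h.compl hsym) hX hY hXY hv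
          (fun x hx y hy => not_not.2 (hc x hx y hy))
        exact ⟨X', Y', h1, h2, h3, h4, by simpa [or_comm] using h5⟩
      · exact splits_insert hsym h hX hY hXY hv hc
    · have hsub := Set.not_nontrivial_iff.1 hQ'
      have hne : Q'.Nonempty := by
        rw [Set.nonempty_iff_ne_empty]
        rintro rfl
        simp at hQ
      obtain ⟨w, hw⟩ := hne
      refine ⟨{v}, Q', ⟨v, rfl⟩, ⟨w, hw⟩, by simpa using hv, by simp, ?_⟩
      by_cases hvw : e v w
      · left
        rintro _ rfl y hy
        rwa [hsub hy hw]
      · right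
        rintro _ rfl y hy
        rwa [hsub hy hw]

/-- A graph without induced path on four vertices is a comparability graph. -/
theorem PathFree.exists_order [Finite V] (hsym : ∀ x y, e x y → e y x) (h : PathFree e Q) :
    ∃ lt : V → V → Prop, (∀ x, ¬ lt x x) ∧ (∀ x y z, lt x y → lt y z → lt x z) ∧
      (∀ x y, lt x y → x ∈ Q ∧ y ∈ Q) ∧
      ∀ x ∈ Q, ∀ y ∈ Q, x ≠ y → (e x y ↔ lt x y ∨ lt y x) := by
  induction hN : Q.ncard using Nat.strong_induction_on generalizing Q with
  | _ N IH =>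
  by_cases hQ : Q.Nontrivial
  · obtain ⟨X, Y, hX, hY, hXY, rfl, hc⟩ := h.splits hsym hQ
    have hd := Set.disjoint_left.1 hXY
    obtain ⟨y0, hy0⟩ := hY
    obtain ⟨x0, hx0⟩ := hX
    obtain ⟨l1, a1, b1, c1, d1⟩ := IH X.ncard (hN ▸ Set.ncard_lt_ncard ⟨Set.subset_union_left,
      fun h => hd (h (Or.inr hy0)) hy0⟩) (h.mono Set.subset_union_left) rfl
    obtain ⟨l2, a2, b2, c2, d2⟩ := IH Y.ncard (hN ▸ Set.ncard_lt_ncard ⟨Set.subset_union_right,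
      fun h => hd hx0 (h (Or.inl hx0))⟩) (h.mono Set.subset_union_right) rfl
    refine ⟨fun x y => l1 x y ∨ l2 x y ∨ (x ∈ X ∧ y ∈ Y ∧ e x y), ?_, ?_, ?_, ?_⟩
    · rintro x (h | h | ⟨h, h', -⟩)
      exacts [a1 x h, a2 x h, hd h h']
    · rintro x y z (h | h | ⟨h, h', h3⟩) (k | k | ⟨k, k', k3⟩)
      · exact Or.inl (b1 _ _ _ h k)
      · exact absurd (c2 _ _ k).1 (hd (c1 _ _ h).2)
      · rcases hc with hc | hc
        · exact Or.inr (Or.inr ⟨(c1 _ _ h).1, k', hc _ (c1 _ _ h).1 _ k'⟩)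
        · exact absurd k3 (hc _ k _ k')
      · exact absurd (c2 _ _ h).2 (hd (c1 _ _ k).1)
      · exact Or.inr (Or.inl (b2 _ _ _ h k))
      · exact absurd (c2 _ _ h).2 (hd k)
      · exact absurd h' (hd (c1 _ _ k).1)
      · rcases hc with hc | hc
        · exact Or.inr (Or.inr ⟨h, (c2 _ _ k).2, hc _ h _ (c2 _ _ k).2⟩)
        · exact absurd h3 (hc _ h _ h')
      · exact absurd h' (hd k)
    · rintro x y (h | h | ⟨h, h', h3⟩)
      · exact ⟨Or.inl (c1 _ _ h).1, Or.inl (c1 _ _ h).2⟩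
      · exact ⟨Or.inr (c2 _ _ h).1, Or.inr (c2 _ _ h).2⟩
      · exact ⟨Or.inl h, Or.inr h'⟩
    · rintro x hx y hy hxy
      rcases hx with hx | hx <;> rcases hy with hy | hy
      · have n1 : ¬ l2 x y := fun h => hd hx (c2 _ _ h).1
        have n2 : ¬ l2 y x := fun h => hd hx (c2 _ _ h).2
        simpa [n1, n2, hd hx, hd hy] using d1 x hx y hy hxy
      · have n1 : ¬ l1 x y := fun h => hd (c1 _ _ h).2 hy
        have n2 : ¬ l1 y x := fun h => hd (c1 _ _ h).1 hy
        have n3 : ¬ l2 x y := fun h => hd hx (c2 _ _ h).1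
        have n4 : ¬ l2 y x := fun h => hd hx (c2 _ _ h).2
        simp [n1, n2, n3, n4, hx, hy, hd hx]
      · have n1 : ¬ l1 x y := fun h => hd (c1 _ _ h).1 hx
        have n2 : ¬ l1 y x := fun h => hd (c1 _ _ h).2 hx
        have n3 : ¬ l2 x y := fun h => hd hy (c2 _ _ h).2
        have n4 : ¬ l2 y x := fun h => hd hy (c2 _ _ h).1
        simpa [n1, n2, n3, n4, hx, hy, hd hy] using ⟨hsym x y, hsym y x⟩
      · have n1 : ¬ l1 x y := fun h => hd (c1 _ _ h).1 hx
        have n2 : ¬ l1 y x := fun h => hd (c1 _ _ h).1 hy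
        have n3 : x ∉ X := fun h => hd h hx
        have n4 : y ∉ X := fun h => hd h hy
        simpa [n1, n2, n3, n4] using d2 x hx y hy hxy
  · have hsub := Set.not_nontrivial_iff.1 hQ
    exact ⟨fun _ _ => False, by simp, by simp, by simp,
      fun x hx y hy hxy => absurd (hsub hx hy) hxy⟩

/-- A strict order on `Q` whose chains have at most `m` elements has a proper height function. -/
theorem exists_height [Finite V] {D : V → V → Prop} {m : ℕ} (hirr : ∀ x ∈ Q, ¬ D x x)
    (htrans : ∀ x ∈ Q, ∀ y ∈ Q, ∀ z ∈ Q, D x y → D y z → D x z)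
    (hm : ∀ s : Finset V, (∀ x ∈ s, x ∈ Q) → (∀ x ∈ s, ∀ y ∈ s, x ≠ y → D x y ∨ D y x) →
      s.card ≤ m) :
    ∃ c : V → ℕ, (∀ x ∈ Q, c x < m) ∧ ∀ x ∈ Q, ∀ y ∈ Q, D x y → c x ≠ c y := by
  classical
  have := Fintype.ofFinite V
  let F : V → Finset (Finset V) := fun x => Finset.univ.filter fun s =>
    (∀ y ∈ s, y ∈ Q) ∧ (∀ y ∈ s, ∀ z ∈ s, y ≠ z → D y z ∨ D z y) ∧ ∀ y ∈ s, D y x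
  have hF : ∀ x, (F x).Nonempty := fun x => ⟨∅, by simp [F]⟩
  have hex : ∀ x, ∃ s ∈ F x, (F x).sup Finset.card = s.card :=
    fun x => Finset.exists_mem_eq_sup _ (hF x) _
  have hins : ∀ x ∈ Q, ∀ s ∈ F x, (∀ y ∈ insert x s, y ∈ Q) ∧
      (∀ y ∈ insert x s, ∀ z ∈ insert x s, y ≠ z → D y z ∨ D z y) ∧
      (insert x s).card = s.card + 1 := by
    intro x hx s hs
    simp only [F, Finset.mem_filter, Finset.mem_univ, true_and] at hs
    obtain ⟨h1, h2, h3⟩ := hs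
    refine ⟨?_, ?_, ?_⟩
    · intro y hy
      rcases Finset.mem_insert.1 hy with rfl | hy
      exacts [hx, h1 y hy]
    · intro y hy z hz hyz
      rcases Finset.mem_insert.1 hy with rfl | hy' <;>
        rcases Finset.mem_insert.1 hz with rfl | hz'
      · exact absurd rfl hyz
      · exact Or.inr (h3 z hz')
      · exact Or.inl (h3 y hy')
      · exact h2 y hy' z hz' hyz
    · exact Finset.card_insert_of_notMem fun h => hirr x hx (h3 x h)
  refine ⟨fun x => (F x).sup Finset.card, ?_, ?_⟩
  · intro x hx
    obtain ⟨s, hs, heq⟩ := hex x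
    obtain ⟨h1, h2, h3⟩ := hins x hx s hs
    have := hm _ h1 h2
    simp only [heq]
    omega
  · intro x hx y hy hxy heq'
    obtain ⟨s, hs, heq⟩ := hex x
    obtain ⟨h1, h2, h3⟩ := hins x hx s hs
    have hmem : insert x s ∈ F y := by
      simp only [F, Finset.mem_filter, Finset.mem_univ, true_and] at hs ⊢
      refine ⟨h1, h2, ?_⟩
      intro z hz
      rcases Finset.mem_insert.1 hz with rfl | hz
      · exact hxy
      · exact htrans z (hs.1 z hz) x hx y hy (hs.2.2 z hz) hxy
    have := Finset.le_sup (f := Finset.card) hmem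
    simp only at heq'
    omega

end Cograph

section Colouring

variable {G : SimpleGraph V} {Z : Set V} {n m : ℕ}

/-- `Z` is properly coloured by `n` colours. -/
def ColOn (G : SimpleGraph V) (Z : Set V) (n : ℕ) : Prop :=
  ∃ c : V → ℕ, (∀ x ∈ Z, c x < n) ∧ ∀ x ∈ Z, ∀ y ∈ Z, G.Adj x y → c x ≠ c y

theorem ColOn.mono {Z' : Set V} (h : ColOn G Z n) (hZ : Z' ⊆ Z) (hn : n ≤ m) : ColOn G Z' m := by
  obtain ⟨c, h1, h2⟩ := h
  exact ⟨c, fun x hx => (h1 x (hZ hx)).trans_le hn, fun x hx y hy => h2 x (hZ hx) y (hZ hy)⟩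

theorem ColOn.of_cover (F : ℕ → Set V) (hcov : ∀ x ∈ Z, ∃ i < m, x ∈ F i)
    (h : ∀ i < m, ColOn G (F i) n) : ColOn G Z (m * n) := by
  classical
  choose! i hi hiF using hcov
  choose! c hc hc' using h
  refine ⟨fun x => i x * n + c (i x) x, ?_, ?_⟩
  · intro x hx
    have h1 := hc (i x) (hi x hx) x (hiF x hx)
    have h2 : (i x + 1) * n ≤ m * n := Nat.mul_le_mul_right _ (hi x hx)
    rw [Nat.add_mul, Nat.one_mul] at h2
    dsimp only
    omega
  · intro x hx y hy hxy heq
    have h1 := hc (i x) (hi x hx) x (hiF x hx)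
    have h2 := hc (i y) (hi y hy) y (hiF y hy)
    have hn : 0 < n := by omega
    dsimp only at heq
    have key : i x = i y := by
      have := congrArg (· / n) heq
      simpa [Nat.mul_comm _ n, Nat.mul_add_div hn, Nat.div_eq_of_lt h1, Nat.div_eq_of_lt h2]
        using this
    have h3 := hiF y hy
    rw [key] at heq
    rw [← key] at h3
    refine hc' (i x) (hi x hx) x (hiF x hx) y h3 hxy ?_
    rw [key]
    omega

end Colouring

end OddHoleFree

namespace OddHoleFree

section Covering

variable {G : SimpleGraph V}

/-- All cliques of `G` inside `Z` have at most `w` vertices. -/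
def CliqueLe (G : SimpleGraph V) (Z : Set V) (w : ℕ) : Prop :=
  ∀ s : Finset V, (∀ x ∈ s, x ∈ Z) → (∀ x ∈ s, ∀ y ∈ s, x ≠ y → G.Adj x y) → s.card ≤ w

theorem CliqueLe.mono {Z Z' : Set V} {w : ℕ} (h : CliqueLe G Z w) (hZ : Z' ⊆ Z) :
    CliqueLe G Z' w :=
  fun s hs => h s fun x hx => hZ (hs x hx)

/-- If a stable set `A` covers `B` and the parity of induced paths between vertices of `A` with
interior in `B` is given by a comparability graph, then `B` can be coloured with few colours. -/
theorem colOn_of_covering [Finite V] {A B : Set V} {lt : V → V → Prop} {w n : ℕ}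
    (hA : ∀ a ∈ A, ∀ c ∈ A, ¬ G.Adj a c) (hAB : ∀ a ∈ A, a ∉ B)
    (hcov : ∀ x ∈ B, ∃ a ∈ A, G.Adj a x) (hirr : ∀ x, ¬ lt x x)
    (htrans : ∀ x y z, lt x y → lt y z → lt x z)
    (hpar : ∀ a ∈ A, ∀ c ∈ A, a ≠ c → ∀ n S, IndPath G a c n S → S ⊆ insert a (insert c B) →
      (Odd n ↔ lt a c ∨ lt c a))
    (hw : CliqueLe G (A ∪ B) (w + 1)) (hn : ∀ Z ⊆ B, CliqueLe G Z w → ColOn G Z n) :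
    ColOn G B ((w + 1) * n) := by
  classical
  have := Fintype.ofFinite V
  have hne : ∀ a ∈ A, ∀ x ∈ B, a ≠ x := by rintro a ha x hx rfl; exact hAB a ha hx
  have siblings : ∀ a ∈ A, ∀ c ∈ A, ∀ x ∈ B, G.Adj a x → G.Adj c x → ¬ (lt a c ∨ lt c a) := by
    intro a ha c hc x hx hax hcx
    by_cases hac : a = c
    · subst hac; simp [hirr]
    rw [← hpar a ha c hc hac 2 _ (.two hax hcx.symm (hA a ha c hc) hac)
      (by rintro z (rfl | rfl | rfl) <;> simp [hx])]
    decide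
  have cousins : ∀ a ∈ A, ∀ c ∈ A, ∀ x ∈ B, ∀ y ∈ B, G.Adj x y → G.Adj a x → ¬ G.Adj a y →
      G.Adj c y → ¬ G.Adj c x → lt a c ∨ lt c a := by
    intro a ha c hc x hx y hy hxy hax hay hcy hcx
    have hac : a ≠ c := by rintro rfl; exact hay hcy
    have hP : IndPath G a c 3 (insert a {x, y, c}) := by
      refine .cons hax (.two hxy hcy.symm (fun h => hcx h.symm) (hne c hc x hx).symm) ?_ ?_
      · simp [hac, hne a ha x hx, hne a ha y hy]
      · rintro z (rfl | rfl | rfl) hz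
        exacts [rfl, absurd hz hay, absurd hz (hA a ha z hc)]
    rw [← hpar a ha c hc hac 3 _ hP (by rintro z (rfl | rfl | rfl | rfl) <;> simp [hx, hy])]
    decide
  have far : ∀ a ∈ A, ∀ c ∈ A, ∀ x ∈ B, ∀ y ∈ B, ∀ z ∈ B, G.Adj x y → G.Adj y z → ¬ G.Adj x z →
      x ≠ z → G.Adj a x → ¬ G.Adj a y → ¬ G.Adj a z → G.Adj c z → ¬ G.Adj c y → ¬ G.Adj c x →
      ¬ (lt a c ∨ lt c a) := by
    intro a ha c hc x hx y hy z hz hxy hyz hxz hxz' hax hay haz hcz hcy hcx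
    have hac : a ≠ c := by rintro rfl; exact haz hcz
    have hP : IndPath G x c 3 (insert x {y, z, c}) := by
      refine .cons hxy (.two hyz hcz.symm (fun h => hcy h.symm) (hne c hc y hy).symm) ?_ ?_
      · simp [hxy.ne, hxz', (hne c hc x hx).symm]
      · rintro u (rfl | rfl | rfl) hu
        exacts [rfl, absurd hu hxz, absurd hu.symm hcx]
    have hP' : IndPath G a c 4 (insert a (insert x {y, z, c})) := by
      refine .cons hax hP ?_ ?_
      · simp [hac, hne a ha x hx, hne a ha y hy, hne a ha z hz]
      · rintro u (rfl | rfl | rfl | rfl) hu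
        exacts [rfl, absurd hu hay, absurd hu haz, absurd hu (hA a ha u hc)]
    rw [← hpar a ha c hc hac 4 _ hP'
      (by rintro u (rfl | rfl | rfl | rfl | rfl) <;> simp [hx, hy, hz])]
    decide
  choose! r hrA hr using hcov
  let Bl : V → V → Prop := fun x y => G.Adj x y ∧ ∀ a ∈ A, G.Adj a x → ¬ G.Adj a y
  have hBlsymm : ∀ x y, Bl x y → Bl y x := fun x y h => ⟨h.1.symm, fun a ha hy hx => h.2 a ha hx hy⟩
  obtain ⟨c, hc, hc'⟩ := exists_height (Q := B) (D := fun x y => Bl x y ∧ lt (r x) (r y))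
    (m := w + 1) (fun x _ h => hirr _ h.2) (by
      rintro x hx y hy z hz ⟨⟨hxy, bxy⟩, hlt⟩ ⟨⟨hyz, byz⟩, hlt'⟩
      have hac := htrans _ _ _ hlt hlt'
      refine ⟨?_, hac⟩
      have hxz' : x ≠ z := by rintro rfl; exact hirr _ hac
      by_cases hxz : G.Adj x z
      · refine ⟨hxz, fun t ht htx htz => ?_⟩
        rcases cousins t ht (r y) (hrA y hy) x hx y hy hxy htx (bxy t ht htx) (hr y hy)
          (fun h => bxy _ (hrA y hy) h (hr y hy)) with h | h
        · exact siblings t ht (r z) (hrA z hz) z hz htz (hr z hz) (Or.inl (htrans _ _ _ h hlt'))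
        · exact siblings t ht (r x) (hrA x hx) x hx htx (hr x hx) (Or.inr (htrans _ _ _ hlt h))
      · exfalso
        by_cases h1 : G.Adj (r x) z
        · exact siblings _ (hrA x hx) _ (hrA z hz) z hz h1 (hr z hz) (Or.inl hac)
        by_cases h2 : G.Adj (r z) x
        · exact siblings _ (hrA x hx) _ (hrA z hz) x hx (hr x hx) h2 (Or.inl hac)
        exact far _ (hrA x hx) _ (hrA z hz) x hx y hy z hz hxy hyz hxz hxz' (hr x hx)
          (bxy _ (hrA x hx) (hr x hx)) h1 (hr z hz)
          (fun h => byz _ (hrA z hz) h (hr z hz)) h2 (Or.inl hac))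
    (fun s hs hcl => hw s (fun x hx => Or.inr (hs x hx)) fun x hx y hy hxy => by
      rcases hcl x hx y hy hxy with h | h
      exacts [h.1.1, h.1.1.symm])
  refine ColOn.of_cover (fun i => {x | x ∈ B ∧ c x = i}) (fun x hx => ⟨c x, hc x hx, hx, rfl⟩) ?_
  intro i _
  refine hn _ (fun x hx => hx.1) ?_
  intro K hKB hK
  have hshare : ∀ x ∈ K, ∀ y ∈ K, ∃ a ∈ A, G.Adj a x ∧ G.Adj a y := by
    intro x hx y hy
    by_cases hxy : x = y
    · subst hxy; exact ⟨r x, hrA x (hKB x hx).1, hr x (hKB x hx).1, hr x (hKB x hx).1⟩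
    by_contra! hno
    have hb : Bl x y := ⟨hK x hx y hy hxy, hno⟩
    have hxB := (hKB x hx).1
    have hyB := (hKB y hy).1
    have heq : c x = c y := (hKB x hx).2.trans (hKB y hy).2.symm
    rcases cousins (r x) (hrA x hxB) (r y) (hrA y hyB) x hxB y hyB hb.1 (hr x hxB)
      (hb.2 _ (hrA x hxB) (hr x hxB)) (hr y hyB) (fun h => hb.2 _ (hrA y hyB) h (hr y hyB))
      with h | h
    · exact hc' x hxB y hyB ⟨hb, h⟩ heq
    · exact hc' y hyB x hxB ⟨hBlsymm _ _ hb, h⟩ heq.symm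
  rcases K.eq_empty_or_nonempty with rfl | ⟨x0, hx0⟩
  · simp
  have hAne : (Finset.univ.filter (· ∈ A)).Nonempty :=
    ⟨r x0, by simpa using hrA x0 (hKB x0 hx0).1⟩
  obtain ⟨a, ha, hmax⟩ := Finset.exists_max_image _ (fun a => (K.filter (G.Adj a ·)).card) hAne
  simp only [Finset.mem_filter, Finset.mem_univ, true_and] at ha hmax
  have hall : ∀ z ∈ K, G.Adj a z := by
    intro z hz
    by_contra haz
    have hpos : 0 < (K.filter (G.Adj a ·)).card := by
      refine lt_of_lt_of_le ?_ (hmax (r x0) (hrA x0 (hKB x0 hx0).1))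
      exact Finset.card_pos.2 ⟨x0, by simp [hx0, hr x0 (hKB x0 hx0).1]⟩
    obtain ⟨y, hy⟩ := Finset.card_pos.1 hpos
    rw [Finset.mem_filter] at hy
    obtain ⟨d, hd, hdy, hdz⟩ := hshare y hy.1 z hz
    refine absurd (hmax d hd) (not_le.2 (Finset.card_lt_card ?_))
    refine ⟨fun x hx => ?_, fun h => ?_⟩
    · rw [Finset.mem_filter] at hx ⊢
      refine ⟨hx.1, ?_⟩
      by_contra hdx
      have hxz : x ≠ z := by rintro rfl; exact hdx hdz
      exact siblings a ha d hd y (hKB y hy.1).1 hy.2 hdy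
        (cousins a ha d hd x (hKB x hx.1).1 z (hKB z hz).1 (hK x hx.1 z hz hxz) hx.2 haz hdz hdx)
    · exact haz (Finset.mem_filter.1 (h (Finset.mem_filter.2 ⟨hz, hdz⟩))).2
  have haK : a ∉ K := fun h => hAB a ha (hKB a h).1
  have := hw (insert a K) (by
      intro x hx
      rcases Finset.mem_insert.1 hx with rfl | hx
      exacts [Or.inl ha, Or.inr (hKB x hx).1]) (by
      intro x hx y hy hxy
      rcases Finset.mem_insert.1 hx with rfl | hx' <;>
        rcases Finset.mem_insert.1 hy with rfl | hy'
      exacts [absurd rfl hxy, hall y hy', (hall x hx').symm, hK x hx' y hy' hxy])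
  rw [Finset.card_insert_of_notMem haK] at this
  omega

end Covering

end OddHoleFree

namespace OddHoleFree

section Layers

variable {G : SimpleGraph V}

/-- `S` and `T` are disjoint and there are no edges between them. -/
def Apart (G : SimpleGraph V) (S T : Set V) : Prop :=
  ∀ x ∈ S, ∀ y ∈ T, x ≠ y ∧ ¬ G.Adj x y

/-- The vertices of `C` that are at distance two from the stable set `P` through `A` can be
coloured with few colours, if the parity of the paths joining vertices of `P` through `Y` is given
by a comparability graph. -/
theorem colOn_second_neighbors [Finite V] (hG : ¬ HasOddHole G) {P A C Y : Set V}
    {lt : V → V → Prop} {w n : ℕ} (hP : ∀ p ∈ P, ∀ q ∈ P, ¬ G.Adj p q) (hAY : Apart G A Y)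
    (hCP : Apart G C P) (hCY : Apart G C Y) (hAC : ∀ a ∈ A, a ∉ C) (hPA : ∀ p ∈ P, p ∉ A)
    (hirr : ∀ x, ¬ lt x x) (htrans : ∀ x y z, lt x y → lt y z → lt x z)
    (hpar : ∀ p ∈ P, ∀ q ∈ P, p ≠ q → ∃ n S, IndPath G p q n S ∧ S ⊆ insert p (insert q Y) ∧
      (Odd n ↔ lt p q ∨ lt q p))
    (hw : CliqueLe G (P ∪ A ∪ C) (w + 1)) (hn : ∀ Z, CliqueLe G Z w → ColOn G Z n) :
    ColOn G {x ∈ C | ∃ a ∈ A, G.Adj a x ∧ ∃ p ∈ P, G.Adj p a}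
      (((w + 1) * n) * ((w + 1) * n)) := by
  set B : Set V := {a ∈ A | ∃ p ∈ P, G.Adj p a} with hB
  have hBA : B ⊆ A := fun a ha => ha.1
  have hparB : ∀ p ∈ P, ∀ q ∈ P, p ≠ q → ∀ n S, IndPath G p q n S →
      S ⊆ insert p (insert q B) → (Odd n ↔ lt p q ∨ lt q p) := by
    intro p hp q hq hpq n S hS hSB
    obtain ⟨m, T, hT, hTY, hm⟩ := hpar p hp q hq hpq
    rw [← hm]
    refine hS.odd_iff_odd hG hT hpq (hP p hp q hq) ?_
    intro x hx hxp hxq y hy hyp hyq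
    rcases hSB hx with h | h | h
    · exact absurd h hxp
    · exact absurd h hxq
    rcases hTY hy with h' | h' | h'
    · exact absurd h' hyp
    · exact absurd h' hyq
    exact hAY x (hBA h) y h'
  obtain ⟨c, hc, hc'⟩ : ColOn G B ((w + 1) * n) :=
    colOn_of_covering hP (fun p hp h => hPA p hp (hBA h)) (fun a ha => ha.2) hirr htrans hparB
      (hw.mono (by
        rintro x (hx | hx)
        · exact Or.inl (Or.inl hx)
        · exact Or.inl (Or.inr (hBA hx)))) (fun Z _ => hn Z)
  have hex : ∀ a, ∃ p, a ∈ B → p ∈ P ∧ G.Adj p a := by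
    intro a
    by_cases ha : a ∈ B
    · obtain ⟨p, hp⟩ := ha.2
      exact ⟨p, fun _ => hp⟩
    · exact ⟨a, fun h => absurd h ha⟩
  choose r hr using hex
  refine ColOn.of_cover (fun i => {x ∈ C | ∃ a ∈ B, c a = i ∧ G.Adj a x}) ?_ ?_
  · rintro x ⟨hx, a, ha, hax, hpa⟩
    exact ⟨c a, hc a ⟨ha, hpa⟩, hx, a, ⟨ha, hpa⟩, rfl, hax⟩
  intro i _
  refine colOn_of_covering (A := {a ∈ B | c a = i}) (lt := fun y z => lt (r y) (r z))
    (fun a ha b hb hab => hc' a ha.1 b hb.1 hab (ha.2.trans hb.2.symm))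
    (fun a ha h => hAC a (hBA ha.1) h.1) (fun x hx => ?_) (fun x => hirr _)
    (fun x y z => htrans _ _ _) ?_ (hw.mono ?_) (fun Z _ => hn Z)
  · obtain ⟨_, a, ha, hai, hax⟩ := hx
    exact ⟨a, ⟨ha, hai⟩, hax⟩
  · rintro y ⟨hy, hyi⟩ z ⟨hz, hzi⟩ hyz m S hS hSC
    have hnadj : ¬ G.Adj y z := fun h => hc' y hy z hz h (hyi.trans hzi.symm)
    obtain ⟨hpP, hpy⟩ := hr y hy
    obtain ⟨hqP, hqz⟩ := hr z hz
    have compare : ∀ k T, IndPath G y z k T → (∀ u ∈ T, u ≠ y → u ≠ z → u ∈ P ∨ u ∈ Y) →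
        (Odd m ↔ Odd k) := by
      intro k T hT hTP
      refine hS.odd_iff_odd hG hT hyz hnadj ?_
      intro x hx hxy hxz u hu huy huz
      rcases hSC hx with h | h | h
      · exact absurd h hxy
      · exact absurd h hxz
      rcases hTP u hu huy huz with h' | h'
      exacts [hCP x h.1 u h', hCY x h.1 u h']
    have through : ∀ p ∈ P, G.Adj p y → G.Adj p z → ¬ Odd m := by
      intro p hp hpy hpz
      rw [compare 2 _ (.two hpy.symm hpz hnadj hyz) (by
        rintro u (rfl | rfl | rfl) h1 h2
        exacts [absurd rfl h1, Or.inl hp, absurd rfl h2])]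
      decide
    have even : ∀ p ∈ P, ∀ q ∈ P, ∀ a ∈ B, G.Adj p a → G.Adj q a → ¬ (lt p q ∨ lt q p) := by
      intro p hp q hq a ha hpa hqa
      by_cases hpq : p = q
      · subst hpq; simp [hirr]
      rw [← hparB p hp q hq hpq 2 _ (.two hpa hqa.symm (hP p hp q hq) hpq)
        (by rintro u (rfl | rfl | rfl) <;> simp [ha])]
      decide
    by_cases hqy : G.Adj (r z) y
    · exact iff_of_false (through _ hqP hqy hqz) (even _ hpP _ hqP y hy hpy hqy)
    by_cases hpz : G.Adj (r y) z
    · exact iff_of_false (through _ hpP hpy hpz) (even _ hpP _ hqP z hz hpz hqz)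
    have hpq : r y ≠ r z := fun h => hpz (h ▸ hqz)
    obtain ⟨k, T, hT, hTY, hk⟩ := hpar _ hpP _ hqP hpq
    have hyA := hBA hy
    have hzA := hBA hz
    have hyT : y ∉ T := by
      intro h
      rcases hTY h with h | h | h
      · exact hPA _ hpP (h ▸ hyA)
      · exact hPA _ hqP (h ▸ hyA)
      · exact (hAY y hyA y h).1 rfl
    have hzT : z ∉ T := by
      intro h
      rcases hTY h with h | h | h
      · exact hPA _ hpP (h ▸ hzA)
      · exact hPA _ hqP (h ▸ hzA)
      · exact (hAY z hzA z h).1 rfl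
    have h1 : IndPath G y (r z) (k + 1) (insert y T) := by
      refine .cons hpy.symm hT hyT fun u hu hyu => ?_
      rcases hTY hu with h | h | h
      · exact h
      · exact absurd (h ▸ hyu.symm) hqy
      · exact absurd hyu (hAY y hyA u h).2
    have h2 : IndPath G y z (k + 1 + 1) (insert z (insert y T)) := by
      refine h1.snoc hqz (by rintro (h | h); exacts [hyz h.symm, hzT h]) ?_
      rintro u (rfl | hu) hzu
      · exact absurd hzu.symm hnadj
      rcases hTY hu with h | h | h
      · exact absurd (h ▸ hzu.symm) hpz
      · exact h
      · exact absurd hzu (hAY z hzA u h).2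
    rw [compare _ _ h2 ?_, ← hk]
    · simp [Nat.odd_add_one]
    · rintro u (rfl | rfl | hu) h1 h2
      · exact absurd rfl h2
      · exact absurd rfl h1
      rcases hTY hu with h | h | h
      · exact Or.inl (h ▸ hpP)
      · exact Or.inl (h ▸ hqP)
      · exact Or.inr h
  · rintro x (hx | hx)
    · exact Or.inl (Or.inr (hBA hx.1))
    · exact Or.inr hx.1

end Layers

end OddHoleFree

namespace OddHoleFree

section Layers

variable {G : SimpleGraph V}

theorem exists_minimal_cover [Finite V] {A P : Set V} (hP : ∀ a ∈ A, ∃ p ∈ P, G.Adj p a) :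
    ∃ Q ⊆ P, (∀ a ∈ A, ∃ q ∈ Q, G.Adj q a) ∧
      ∀ q ∈ Q, ∃ a ∈ A, G.Adj q a ∧ ∀ p ∈ Q, G.Adj p a → p = q := by
  obtain ⟨Q, hQ, hmin⟩ := exists_minimal_of_wellFoundedLT
    (fun Q : Set V => Q ⊆ P ∧ ∀ a ∈ A, ∃ q ∈ Q, G.Adj q a) ⟨P, subset_rfl, hP⟩
  refine ⟨Q, hQ.1, hQ.2, fun q hq => ?_⟩
  by_contra! hcon
  refine (hmin (y := Q \ {q}) ⟨Set.sdiff_subset.trans hQ.1, fun a ha => ?_⟩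
    Set.sdiff_subset hq).2 rfl
  obtain ⟨p, hp, hpa⟩ := hQ.2 a ha
  by_cases hpq : p = q
  · subst hpq
    obtain ⟨p', hp', hpa', hne⟩ := hcon a ha hpa
    exact ⟨p', ⟨hp', hne⟩, hpa'⟩
  · exact ⟨p, ⟨hp, hpq⟩, hpa⟩

/-- Two vertices with private neighbours attached to a connected set `C` are joined, inside any set
`W` apart from `C`, by induced paths of a single parity. -/
theorem odd_iff_odd_of_private (hG : ¬ HasOddHole G) {A C Q Y : Set V} (hAY : Apart G A Y)
    (hCQ : Apart G C Q) (hCY : Apart G C Y) (hQA : ∀ q ∈ Q, q ∉ A)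
    (hA : ∀ a ∈ A, ∃ c ∈ C, G.Adj a c)
    (hC : ∀ x ∈ C, ∀ y ∈ C, Joined G C x y)
    (hpriv : ∀ q ∈ Q, ∃ a ∈ A, G.Adj q a ∧ ∀ p ∈ Q, G.Adj p a → p = q)
    {x y : V} (hx : x ∈ Q) (hy : y ∈ Q) {n m : ℕ} {S T : Set V} (hS : IndPath G x y n S)
    (hT : IndPath G x y m T) (hSW : S ⊆ Q ∪ Y) (hTW : T ⊆ Q ∪ Y) : Odd n ↔ Odd m := by
  by_cases hne : x = y
  · subst hne
    rw [hS.length_eq_zero, hT.length_eq_zero]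
  by_cases hadj : G.Adj x y
  · rw [hS.length_eq_one hadj, hT.length_eq_one hadj]
  obtain ⟨a, haA, hxa, ha⟩ := hpriv x hx
  obtain ⟨b, hbA, hyb, hb⟩ := hpriv y hy
  obtain ⟨c, hc, hac⟩ := hA a haA
  obtain ⟨d, hd, hbd⟩ := hA b hbA
  have hU : Joined G (insert x (insert y (insert a (insert b C)))) x y := by
    have h1 : Joined G (insert x (insert y (insert a (insert b C)))) c d :=
      (hC c hc d hd).mono fun z hz => by simp [hz]
    have h2 := (h1.head (z := a) (by simp) hac).head (z := x) (by simp) hxa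
    exact ((h2.symm.head (z := b) (by simp) hbd).head (z := y) (by simp) hyb).symm
  obtain ⟨k, U, hU, hUW⟩ := hU
  have key : ∀ {n S}, IndPath G x y n S → S ⊆ Q ∪ Y → (Odd n ↔ Odd k) := by
    intro n S hS hSW
    refine hS.odd_iff_odd hG hU hne hadj ?_
    intro u hu hux huy v hv hvx hvy
    have priv : ∀ z ∈ Q, ∀ a ∈ A, (∀ p ∈ Q, G.Adj p a → p = z) → u ≠ z → u ≠ a ∧ ¬ G.Adj u a := by
      intro z _ a haA ha huz
      rcases hSW hu with h | h
      · exact ⟨fun hua => hQA u h (hua ▸ haA), fun hua => huz (ha u h hua)⟩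
      · exact ⟨(hAY a haA u h).1.symm, fun hua => (hAY a haA u h).2 hua.symm⟩
    rcases hUW hv with h | h | h | h | h
    · exact absurd h hvx
    · exact absurd h hvy
    · exact h ▸ priv x hx a haA ha hux
    · exact h ▸ priv y hy b hbA hb huy
    · rcases hSW hu with h' | h'
      · exact ⟨(hCQ v h u h').1.symm, fun hh => (hCQ v h u h').2 hh.symm⟩
      · exact ⟨(hCY v h u h').1.symm, fun hh => (hCY v h u h').2 hh.symm⟩
  rw [key hS hSW, key hT hTW]

/-- A connected set `C` lying two layers below `P` can be coloured with few colours. -/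
theorem colOn_layer [Finite V] (hG : ¬ HasOddHole G) {A C P Y : Set V} {w n : ℕ}
    (hAY : Apart G A Y) (hCP : Apart G C P) (hCY : Apart G C Y) (hAC : ∀ a ∈ A, a ∉ C)
    (hPA : ∀ p ∈ P, p ∉ A) (hC : ∀ x ∈ C, ∀ y ∈ C, Joined G C x y)
    (hCA : ∀ c ∈ C, ∃ a ∈ A, G.Adj a c) (hA : ∀ a ∈ A, ∃ c ∈ C, G.Adj a c)
    (hP : ∀ a ∈ A, ∃ p ∈ P, G.Adj p a)
    (hY : ∀ x ∈ P ∪ Y, ∀ y ∈ P ∪ Y, Joined G (insert x (insert y Y)) x y)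
    (hw : CliqueLe G (P ∪ A ∪ C) (w + 1)) (hn : ∀ Z, CliqueLe G Z w → ColOn G Z n) :
    ColOn G C (2 * ((w + 1) * (((w + 1) * n) * ((w + 1) * n)))) := by
  classical
  obtain ⟨Q, hQP, hQcov, hpriv⟩ := exists_minimal_cover hP
  have hCQ : Apart G C Q := fun c hc q hq => hCP c hc q (hQP hq)
  have hQA : ∀ q ∈ Q, q ∉ A := fun q hq => hPA q (hQP hq)
  have wellDef : ∀ x ∈ Q, ∀ y ∈ Q, ∀ n S m T, IndPath G x y n S → IndPath G x y m T →
      S ⊆ Q ∪ Y → T ⊆ Q ∪ Y → (Odd n ↔ Odd m) := fun x hx y hy n S m T hS hT hSW hTW =>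
    odd_iff_odd_of_private hG hAY hCQ hCY hQA hA hC hpriv hx hy hS hT hSW hTW
  set e : V → V → Prop := fun x y => ∃ n S, IndPath G x y n S ∧ S ⊆ Q ∪ Y ∧ Odd n with he
  have he_iff : ∀ x ∈ Q, ∀ y ∈ Q, ∀ n S, IndPath G x y n S → S ⊆ Q ∪ Y → (e x y ↔ Odd n) := by
    intro x hx y hy n S hS hSW
    constructor
    · rintro ⟨m, T, hT, hTW, hm⟩
      exact (wellDef x hx y hy _ _ _ _ hS hT hSW hTW).2 hm
    · exact fun h => ⟨n, S, hS, hSW, h⟩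
  have he_symm : ∀ x y, e x y → e y x := by
    rintro x y ⟨n, S, hS, h⟩
    exact ⟨n, S, hS.symm, h⟩
  have he_irr : ∀ x, ¬ e x x := by
    rintro x ⟨n, S, hS, -, hn⟩
    rw [hS.length_eq_zero] at hn
    exact absurd hn (by decide)
  have joined : ∀ x ∈ Q ∪ Y, ∀ y ∈ Q ∪ Y, Joined G (Q ∪ Y) x y := by
    intro x hx y hy
    have hsub : Q ∪ Y ⊆ P ∪ Y := Set.union_subset_union_left _ hQP
    refine (hY x (hsub hx) y (hsub hy)).mono ?_
    rintro z (rfl | rfl | hz)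
    exacts [hx, hy, Or.inr hz]
  rcases Q.eq_empty_or_nonempty with hQe | ⟨s, hs⟩
  · refine ⟨fun _ => 0, fun x hx => ?_, fun x hx => ?_⟩ <;>
    · obtain ⟨a, ha, _⟩ := hCA x hx
      obtain ⟨q, hq, _⟩ := hQcov a ha
      simp [hQe] at hq
  set K : ℕ → Set V := fun i => {x ∈ Q | e s x ↔ i = 0} with hK
  have hKQ : ∀ i, K i ⊆ Q := fun i x hx => hx.1
  have pathFree : ∀ i, PathFree e (K i) := by
    intro i a ha b hb c hc d hd hab hbc hcd hac had hbd
    have hsne : ∀ x ∈ K i, ∀ y ∈ K i, e x y → s ≠ x := by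
      rintro x hx y hy hxy rfl
      exact he_irr s (hx.2.2 (hy.2.1 hxy))
    have hinj : Function.Injective ![s, a, b, c, d] := by
      have h1 := hsne a ha b hb hab
      have h2 := hsne b hb a ha (he_symm _ _ hab)
      have h3 := hsne c hc d hd hcd
      have h4 := hsne d hd c hc (he_symm _ _ hcd)
      have h5 : a ≠ b := by rintro rfl; exact he_irr _ hab
      have h6 : b ≠ c := by rintro rfl; exact he_irr _ hbc
      have h7 : c ≠ d := by rintro rfl; exact he_irr _ hcd
      have h8 : a ≠ c := by rintro rfl; exact had hcd
      have h9 : a ≠ d := by rintro rfl; exact hbd (he_symm _ _ hab)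
      have h10 : b ≠ d := by rintro rfl; exact had hab
      refine List.nodup_ofFn.1 (show [s, a, b, c, d].Nodup from ?_)
      simp [h1, h2, h3, h4, h5, h6, h7, h8, h9, h10]
    have htQ : ∀ j, ![s, a, b, c, d] j ∈ Q := by
      intro j
      fin_cases j
      exacts [hs, hKQ i ha, hKQ i hb, hKQ i hc, hKQ i hd]
    refine not_isPentagon_of_isParity (G := G) _ (Q ∪ Y) rfl ![s, a, b, c, d]
      (fun j k => decide (e (![s, a, b, c, d] j) (![s, a, b, c, d] k))) joined hinj
      (fun j => Or.inl (htQ j)) ?_ ?_ ?_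
    · intro j k
      simp only [decide_eq_decide]
      exact ⟨he_symm _ _, he_symm _ _⟩
    · intro j k _ n S hS hSW
      simp only [decide_eq_decide]
      exact he_iff _ (htQ j) _ (htQ k) n S hS hSW
    · have h1 := ha.2
      have h2 := hb.2
      have h3 := hc.2
      have h4 := hd.2
      by_cases hi : i = 0 <;> simp [IsPentagon, hi] at h1 h2 h3 h4 ⊢ <;>
        simp [h1, h2, h3, h4, hab, hbc, hcd, hac, had, hbd]
  refine ColOn.of_cover (fun i => {x ∈ C | ∃ a ∈ A, G.Adj a x ∧ ∃ p ∈ K i, G.Adj p a}) ?_ ?_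
  · intro x hx
    obtain ⟨a, ha, hax⟩ := hCA x hx
    obtain ⟨q, hq, hqa⟩ := hQcov a ha
    by_cases hsq : e s q
    · exact ⟨0, by omega, hx, a, ha, hax, q, ⟨hq, by simp [hsq]⟩, hqa⟩
    · exact ⟨1, by omega, hx, a, ha, hax, q, ⟨hq, by simp [hsq]⟩, hqa⟩
  intro i _
  obtain ⟨lt, hirr, htrans, -, hlt⟩ := (pathFree i).exists_order he_symm
  obtain ⟨c, hc, hc'⟩ := exists_height (Q := K i) (D := fun x y => G.Adj x y ∧ lt x y) (m := w + 1)
    (fun x _ h => hirr x h.2)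
    (by
      rintro x hx y hy z hz ⟨hxy, hxy'⟩ ⟨hyz, hyz'⟩
      have hxz := htrans x y z hxy' hyz'
      have hne : x ≠ z := by rintro rfl; exact hirr _ hxz
      refine ⟨?_, hxz⟩
      by_contra hnadj
      have h1 := (hlt x hx z hz hne).2 (Or.inl hxz)
      rw [he_iff x hx.1 z hz.1 2 _ (.two hxy hyz hnadj hne) (by
        rintro u (rfl | rfl | rfl)
        exacts [Or.inl hx.1, Or.inl hy.1, Or.inl hz.1])] at h1
      exact absurd h1 (by decide))
    (fun t ht ht' => hw t (fun x hx => Or.inl (Or.inl (hQP (ht x hx).1))) fun x hx y hy hne =>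
      (ht' x hx y hy hne).elim (fun h => h.1) fun h => h.1.symm)
  refine ColOn.of_cover
    (fun j => {x ∈ C | ∃ a ∈ A, G.Adj a x ∧ ∃ p ∈ {p ∈ K i | c p = j}, G.Adj p a}) ?_ ?_
  · rintro x ⟨hx, a, ha, hax, p, hp, hpa⟩
    exact ⟨c p, hc p hp, hx, a, ha, hax, p, ⟨hp, rfl⟩, hpa⟩
  intro j _
  refine colOn_second_neighbors hG (lt := lt) (Y := Y) ?_ hAY
    (fun x hx p hp => hCP x hx p (hQP hp.1.1)) hCY hAC (fun p hp => hPA p (hQP hp.1.1)) hirr htrans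
    ?_ (hw.mono ?_) hn
  · rintro p ⟨hp, hpj⟩ q ⟨hq, hqj⟩ hpq
    have h1 : e p q := ⟨1, _, .edge hpq, by
      rintro u (rfl | rfl)
      exacts [Or.inl hp.1, Or.inl hq.1], by decide⟩
    rcases (hlt p hp q hq hpq.ne).1 h1 with h | h
    · exact hc' p hp q hq ⟨hpq, h⟩ (hpj.trans hqj.symm)
    · exact hc' q hq p hp ⟨hpq.symm, h⟩ (hqj.trans hpj.symm)
  · rintro p ⟨hp, -⟩ q ⟨hq, -⟩ hpq
    obtain ⟨m, S, hS, hSY⟩ := hY p (Or.inl (hQP hp.1)) q (Or.inl (hQP hq.1))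
    refine ⟨m, S, hS, hSY, ?_⟩
    rw [← hlt p hp q hq hpq, he_iff p hp.1 q hq.1 m S hS (hSY.trans ?_)]
    rintro u (rfl | rfl | hu)
    exacts [Or.inl hp.1, Or.inl hq.1, Or.inr hu]
  · rintro x ((hx | hx) | hx)
    exacts [Or.inl (Or.inl (hQP hx.1.1)), Or.inl (Or.inr hx), Or.inr hx]

end Layers

end OddHoleFree

namespace OddHoleFree

section Levels

variable {G : SimpleGraph V}

/-- Distances from a choice of roots, one in each component of `H`. -/
theorem exists_levels (H : SimpleGraph V) : ∃ (r : V → V) (d : V → ℕ),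
    (∀ x y, H.Adj x y → r x = r y ∧ d x ≤ d y + 1) ∧
    (∀ x k, d x = k + 1 → ∃ y, H.Adj y x ∧ d y = k) ∧ ∀ x, d x = 0 → x = r x := by
  set r : V → V := fun x => (H.connectedComponentMk x).out with hr
  have hreach : ∀ x, H.Reachable (r x) x := fun x =>
    ConnectedComponent.exact (Quot.out_eq (H.connectedComponentMk x))
  have hroot : ∀ x y, H.Adj x y → r x = r y := fun x y hxy => by
    simp only [hr, ConnectedComponent.sound hxy.reachable]
  have hle : ∀ x y, H.Adj x y → H.dist (r x) x ≤ H.dist (r y) y + 1 := by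
    intro x y hxy
    obtain ⟨p, hp⟩ := (hreach y).exists_walk_length_eq_dist
    rw [hroot x y hxy, ← hp, ← Walk.length_concat p hxy.symm]
    exact dist_le _
  refine ⟨r, fun x => H.dist (r x) x, fun x y hxy => ⟨hroot x y hxy, hle x y hxy⟩, ?_, ?_⟩
  · intro x k hk
    change H.dist (r x) x = k + 1 at hk
    obtain ⟨p, hp⟩ := (hreach x).symm.exists_walk_length_eq_dist
    rw [dist_comm, hk] at hp
    have split : ∀ v (p : H.Walk x v), p.length = k + 1 →
        ∃ y, H.Adj x y ∧ ∃ q : H.Walk y v, q.length = k := by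
      intro v p hp
      cases p with
      | nil => simp at hp
      | cons h q => exact ⟨_, h, q, by simpa using hp⟩
    obtain ⟨y, hxy, q, hq⟩ := split _ p hp
    refine ⟨y, hxy.symm, ?_⟩
    have h1 := hle x y hxy
    have h2 : H.dist (r y) y ≤ q.length := by
      rw [← hroot x y hxy, dist_comm]
      exact dist_le q
    change H.dist (r y) y = k
    omega
  · intro x hx
    exact ((hreach x).dist_eq_zero_iff.1 hx).symm

theorem Joined.of_walk {H : SimpleGraph V} (hH : H ≤ G) {W : Set V} {x y : V} (p : H.Walk x y)
    (hp : ∀ z ∈ p.support, z ∈ W) : Joined G W x y := by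
  induction p with
  | nil => exact .refl (hp _ (by simp))
  | cons h q ih => exact (ih fun z hz => hp z (by simp [hz])).head (hp _ (by simp)) (hH h)

/-- Colourings of the components of a spanning subgraph `H` combine to a colouring of a set all of
whose edges lie in `H`. -/
theorem ColOn.of_components {H : SimpleGraph V} {Z : Set V} {n : ℕ}
    (hZ : ∀ x ∈ Z, ∀ y ∈ Z, G.Adj x y → H.Adj x y)
    (h : ∀ x ∈ Z, ColOn G {y | H.Reachable x y} n) : ColOn G Z n := by
  have hK : ∀ K : H.ConnectedComponent, (∃ x ∈ Z, H.connectedComponentMk x = K) →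
      ColOn G {y | H.connectedComponentMk y = K} n := by
    rintro _ ⟨x, hx, rfl⟩
    exact (h x hx).mono (fun y hy => (ConnectedComponent.exact hy).symm) le_rfl
  choose! c hc hc' using hK
  refine ⟨fun x => c (H.connectedComponentMk x) x, fun x hx => hc _ ⟨x, hx, rfl⟩ x rfl, ?_⟩
  intro x hx y hy hxy
  have hxy' := ConnectedComponent.sound (hZ x hx y hy hxy).reachable
  simp only [hxy']
  exact hc' _ ⟨y, hy, rfl⟩ x hxy' y rfl hxy

/-- The inductive step on the clique number. -/
theorem colOn_step [Finite V] (hG : ¬ HasOddHole G) {w n : ℕ} (hw0 : 1 ≤ w)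
    (hn : ∀ Z, CliqueLe G Z w → ColOn G Z n) {Z : Set V} (hZ : CliqueLe G Z (w + 1)) :
    ColOn G Z (2 * (2 * ((w + 1) * (((w + 1) * n) * ((w + 1) * n))))) := by
  classical
  let H : SimpleGraph V :=
    { Adj := fun x y => G.Adj x y ∧ x ∈ Z ∧ y ∈ Z
      symm := ⟨fun x y h => ⟨h.1.symm, h.2.2, h.2.1⟩⟩
      loopless := ⟨fun x h => G.loopless.irrefl x h.1⟩ }
  obtain ⟨r, d, hadj, hpred, hzero⟩ := exists_levels H
  let H' : SimpleGraph V :=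
    { Adj := fun x y => H.Adj x y ∧ d x = d y
      symm := ⟨fun x y h => ⟨h.1.symm, h.2.symm⟩⟩
      loopless := ⟨fun x h => H.loopless.irrefl x h.1⟩ }
  have hgap : ∀ x ∈ Z, ∀ y ∈ Z, d y + 1 < d x → x ≠ y ∧ ¬ G.Adj x y := by
    intro x hx y hy hlt
    refine ⟨?_, fun h => ?_⟩
    · rintro rfl; omega
    · have := (hadj x y ⟨h, hx, hy⟩).2; omega
  refine ColOn.of_cover (fun i => {x ∈ Z | d x % 2 = i})
    (fun x hx => ⟨d x % 2, Nat.mod_lt _ (by omega), hx, rfl⟩) fun i _ => ?_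
  refine ColOn.of_components (H := H') ?_ ?_
  · rintro x ⟨hx, hxi⟩ y ⟨hy, hyi⟩ hxy
    have h1 := (hadj x y ⟨hxy, hx, hy⟩).2
    have h2 := (hadj y x ⟨hxy.symm, hy, hx⟩).2
    exact ⟨⟨hxy, hx, hy⟩, by omega⟩
  rintro x ⟨hx, -⟩
  set C : Set V := {y | H'.Reachable x y} with hCdef
  have hC : ∀ y ∈ C, y ∈ Z ∧ r y = r x ∧ d y = d x := by
    rintro y ⟨p⟩
    clear hCdef C
    induction p with
    | nil => exact ⟨hx, rfl, rfl⟩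
    | cons h q ih =>
      obtain ⟨h1, h2, h3⟩ := ih h.1.2.2
      exact ⟨h1, h2.trans (hadj _ _ h.1).1.symm, h3.trans h.2.symm⟩
  have hlarge : n ≤ 2 * ((w + 1) * (((w + 1) * n) * ((w + 1) * n))) := by
    rcases Nat.eq_zero_or_pos n with rfl | hpos
    · simp
    calc n ≤ (w + 1) * n := Nat.le_mul_of_pos_left _ (by omega)
      _ ≤ ((w + 1) * n) * ((w + 1) * n) := Nat.le_mul_of_pos_left _ (by positivity)
      _ ≤ (w + 1) * (((w + 1) * n) * ((w + 1) * n)) := Nat.le_mul_of_pos_left _ (by omega)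
      _ ≤ _ := Nat.le_mul_of_pos_left _ (by omega)
  rcases hk : d x with _ | _ | j
  · refine (hn C fun s hs _ => (Finset.card_le_one.2 fun a ha b hb => ?_).trans hw0).mono
      subset_rfl hlarge
    obtain ⟨-, ha2, ha3⟩ := hC a (hs a ha)
    obtain ⟨-, hb2, hb3⟩ := hC b (hs b hb)
    rw [hzero a (ha3.trans hk), hzero b (hb3.trans hk), ha2, hb2]
  · refine (hn C fun s hs hs' => ?_).mono subset_rfl hlarge
    rcases s.eq_empty_or_nonempty with rfl | ⟨a, ha⟩
    · simp
    have hroot : ∀ a ∈ s, H.Adj (r x) a := by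
      intro a ha
      obtain ⟨ha1, ha2, ha3⟩ := hC a (hs a ha)
      obtain ⟨y, hya, hy0⟩ := hpred a 0 (ha3.trans hk)
      rwa [← ha2, ← (hadj y a hya).1, ← hzero y hy0]
    have hnotin : r x ∉ s := fun h => (hroot _ h).ne rfl
    have := hZ (insert (r x) s) (by
      intro b hb
      rcases Finset.mem_insert.1 hb with rfl | hb
      exacts [(hroot a ha).2.1, (hC b (hs b hb)).1]) (by
      intro b hb c hc hbc
      rcases Finset.mem_insert.1 hb with rfl | hb <;> rcases Finset.mem_insert.1 hc with rfl | hc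
      exacts [absurd rfl hbc, (hroot c hc).1, (hroot b hb).1.symm, hs' b hb c hc hbc])
    rw [Finset.card_insert_of_notMem hnotin] at this
    omega
  · have hCd : ∀ y ∈ C, d y = j + 2 := fun y hy => (hC y hy).2.2.trans hk
    have hup : ∀ m ≤ j, ∀ y ∈ Z, r y = r x → d y = m →
        Joined G (insert y {z ∈ Z | r z = r x ∧ d z < j}) y (r x) := by
      intro m
      induction m with
      | zero =>
        intro _ y _ hyr hy
        rw [← hyr, ← hzero y hy]
        exact .refl (by simp)
      | succ m ih =>
        intro hm y hy hyr hyd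
        obtain ⟨z, hzy, hz⟩ := hpred y m hyd
        have hzr : r z = r x := (hadj z y hzy).1.trans hyr
        refine ((ih (by omega) z hzy.2.1 hzr hz).mono ?_).head (by simp) hzy.1.symm
        rintro u (rfl | hu)
        exacts [Or.inr ⟨hzy.2.1, hzr, by omega⟩, Or.inr hu]
    refine colOn_layer hG (A := {y ∈ Z | r y = r x ∧ d y = j + 1 ∧ ∃ c ∈ C, G.Adj y c})
      (P := {y ∈ Z | r y = r x ∧ d y = j}) (Y := {y ∈ Z | r y = r x ∧ d y < j})
      ?_ ?_ ?_ ?_ ?_ ?_ ?_ ?_ ?_ ?_ (hZ.mono ?_) hn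
    · rintro a ⟨ha, -, had, -⟩ y ⟨hy, -, hyd⟩
      exact hgap a ha y hy (by omega)
    · rintro a ha y ⟨hy, -, hyd⟩
      exact hgap a (hC a ha).1 y hy (by have := hCd a ha; omega)
    · rintro a ha y ⟨hy, -, hyd⟩
      exact hgap a (hC a ha).1 y hy (by have := hCd a ha; omega)
    · rintro a ⟨-, -, had, -⟩ haC
      have := hCd a haC
      omega
    · rintro p ⟨-, -, hp⟩ ⟨-, -, hp', -⟩
      omega
    · intro y hy z hz
      obtain ⟨p⟩ := (hy.symm.trans hz : H'.Reachable y z)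
      refine Joined.of_walk (H := H') (fun _ _ h => h.1.1) p fun u hu => ?_
      exact hy.trans ⟨p.takeUntil u hu⟩
    · intro c hc
      obtain ⟨hc1, hc2, -⟩ := hC c hc
      obtain ⟨y, hyc, hy⟩ := hpred c (j + 1) (hCd c hc)
      exact ⟨y, ⟨hyc.2.1, (hadj y c hyc).1.trans hc2, hy, c, hc, hyc.1⟩, hyc.1⟩
    · rintro a ⟨-, -, -, h⟩
      exact h
    · rintro a ⟨-, har, had, -⟩
      obtain ⟨p, hpa, hp⟩ := hpred a j had
      exact ⟨p, ⟨hpa.2.1, (hadj p a hpa).1.trans har, hp⟩, hpa.1⟩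
    · have hup' : ∀ y ∈ {y ∈ Z | r y = r x ∧ d y = j} ∪ {y ∈ Z | r y = r x ∧ d y < j},
          Joined G (insert y {z ∈ Z | r z = r x ∧ d z < j}) y (r x) := by
        rintro y (⟨h1, h2, h3⟩ | ⟨h1, h2, h3⟩)
        exacts [hup j le_rfl y h1 h2 h3, hup (d y) h3.le y h1 h2 rfl]
      intro y hy z hz
      refine ((hup' y hy).mono ?_).trans ((hup' z hz).mono ?_).symm
      · rintro u (rfl | hu)
        exacts [Or.inl rfl, Or.inr (Or.inr hu)]
      · exact Set.subset_insert _ _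
    · rintro y ((hy | hy) | hy)
      exacts [hy.1, hy.1, (hC y hy).1]

theorem colOn_of_cliqueLe [Finite V] (hG : ¬ HasOddHole G) (w : ℕ) :
    ∀ Z, CliqueLe G Z (w + 1) → ColOn G Z (2 ^ (2 ^ (w + 3) - 2 * w - 8)) := by
  induction w with
  | zero =>
    intro Z hZ
    classical
    refine ⟨fun _ => 0, fun x _ => by simp, fun x hx y hy hxy => ?_⟩
    have := hZ {x, y} (by simp [hx, hy]) (by
      intro a ha b hb hab
      simp only [Finset.mem_insert, Finset.mem_singleton] at ha hb
      rcases ha with rfl | rfl <;> rcases hb with rfl | rfl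
      exacts [absurd rfl hab, hxy, hxy.symm, absurd rfl hab])
    rw [Finset.card_pair hxy.ne] at this
    omega
  | succ w ih =>
    intro Z hZ
    refine (colOn_step hG (by omega) ih hZ).mono subset_rfl ?_
    have hexp : 2 ^ (w + 1 + 3) - 2 * (w + 1) - 8 =
        2 + 2 * (w + 2) + 2 * (2 ^ (w + 3) - 2 * w - 8) := by
      have h1 : 2 ^ (w + 1 + 3) = 2 * 2 ^ (w + 3) := by ring
      have h2 : 2 * w + 8 ≤ 2 ^ (w + 3) := by
        have h3 : w < 2 ^ w := Nat.lt_two_pow_self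
        have h4 : 2 ^ (w + 3) = 8 * 2 ^ w := by ring
        omega
      omega
    have hcube : ∀ w : ℕ, (w + 2) ^ 3 ≤ 4 ^ (w + 2) := by
      intro w
      induction w with
      | zero => norm_num
      | succ w ih =>
        rw [pow_succ 4]
        nlinarith [Nat.zero_le w, sq_nonneg w]
    rw [hexp]
    generalize 2 ^ (w + 3) - 2 * w - 8 = k
    rw [pow_add, pow_add, pow_mul, mul_comm 2 k, pow_mul]
    generalize 2 ^ k = n
    have := Nat.mul_le_mul_right (n ^ 2) (hcube w)
    calc _ = 4 * ((w + 2) ^ 3 * n ^ 2) := by ring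
      _ ≤ 4 * (4 ^ (w + 2) * n ^ 2) := by omega
      _ = _ := by norm_num; ring

end Levels

end OddHoleFree

theorem stmt9 [Fintype V] (G : SimpleGraph V) (h : ¬ HasOddHole G) :
    G.chromaticNumber ≤ ((2 ^ 2 ^ (G.cliqueNum + 2) : ℕ) : ℕ∞) := by
  have hcl : OddHoleFree.CliqueLe G Set.univ (G.cliqueNum - 1 + 1) := fun s _ hs => by
    have hs' : G.IsClique (s : Set V) := fun x hx y hy => hs x hx y hy
    exact hs'.card_le_cliqueNum.trans (by omega)
  have hexp : 2 ^ (G.cliqueNum - 1 + 3) - 2 * (G.cliqueNum - 1) - 8 ≤ 2 ^ (G.cliqueNum + 2) := by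
    rcases Nat.eq_zero_or_pos G.cliqueNum with h0 | h0
    · simp [h0]
    · rw [show G.cliqueNum - 1 + 3 = G.cliqueNum + 2 by omega, Nat.sub_sub]
      exact Nat.sub_le _ _
  obtain ⟨c, hc, hc'⟩ := (OddHoleFree.colOn_of_cliqueLe h _ _ hcl).mono subset_rfl
    (Nat.pow_le_pow_right (by omega) hexp)
  exact Colorable.chromaticNumber_le ⟨Coloring.mk (fun x => ⟨c x, hc x trivial⟩) fun hxy heq =>
    hc' _ trivial _ trivial hxy (Fin.mk.inj heq)⟩
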